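/- Let α ∈ (0,π) and w, L ∈ (0,∞), and let P = P(α,w,L). If u, v : P → ℝ are two translators, each having boundary value −∞ at every point of the horizontal sides of P and boundary value +∞ at every point of the nonhorizontal sides, then u − v is constant on P. -/

import Mathlib

open Real Filter MeasureTheory Set

noncomputable section

/-- Partial derivative with respect to the first variable. -/
def pdx (u : ℝ × ℝ → ℝ) (p : ℝ × ℝ) : ℝ := fderiv ℝ u p (1, 0)

/-- Partial derivative with respect to the second variable. -/
def pdy (u : ℝ × ℝ → ℝ) (p : ℝ × ℝ) : ℝ := fderiv ℝ u p (0, 1)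

/-- `u` is a smooth solution of the translator equation
`(1 + u_y²)u_xx − 2u_x u_y u_xy + (1 + u_x²)u_yy = 1 + u_x² + u_y²` on `Ω`. -/
def IsTranslatorOn (Ω : Set (ℝ × ℝ)) (u : ℝ × ℝ → ℝ) : Prop :=
  ContDiffOn ℝ (⊤ : ℕ∞) u Ω ∧
  ∀ p ∈ Ω,
    (1 + (pdy u p) ^ 2) * pdx (pdx u) p
      - 2 * pdx u p * pdy u p * pdy (pdx u) p
      + (1 + (pdx u p) ^ 2) * pdy (pdy u) p
    = 1 + (pdx u p) ^ 2 + (pdy u p) ^ 2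

/-- The open parallelogram `P(α, w, L)`. -/
def Pgram (α w L : ℝ) : Set (ℝ × ℝ) :=
  {p | 0 < p.2 ∧ p.2 < w ∧
       p.2 * Real.cos α / Real.sin α < p.1 ∧
       p.1 < L + p.2 * Real.cos α / Real.sin α}

/-- `u` is a translator on `P(α,w,L)` with boundary value `−∞` at every point of the
horizontal sides and `+∞` at every point of the nonhorizontal sides. -/
def ScherkBVP (α w L : ℝ) (u : ℝ × ℝ → ℝ) : Prop :=
  IsTranslatorOn (Pgram α w L) u ∧
  (∀ x : ℝ, 0 < x → x < L →
      Tendsto u (nhdsWithin (x, 0) (Pgram α w L)) atBot) ∧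
  (∀ x : ℝ, w * Real.cos α / Real.sin α < x → x < L + w * Real.cos α / Real.sin α →
      Tendsto u (nhdsWithin (x, w) (Pgram α w L)) atBot) ∧
  (∀ y : ℝ, 0 < y → y < w →
      Tendsto u (nhdsWithin (y * Real.cos α / Real.sin α, y) (Pgram α w L)) atTop) ∧
  (∀ y : ℝ, 0 < y → y < w →
      Tendsto u (nhdsWithin (L + y * Real.cos α / Real.sin α, y) (Pgram α w L)) atTop)

/-- The region `Ω(α, w)`: a "parallelogram" whose right-hand side is at infinity. -/
def OmegaReg (α w : ℝ) : Set (ℝ × ℝ) :=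
  {p | 0 < p.2 ∧ p.2 < w ∧ p.2 * Real.cos α / Real.sin α < p.1}

/-- `u` is a translator on `Ω(α,w)` with boundary value `−∞` at every point of the two
horizontal edges and `+∞` at every point of the nonhorizontal edge. -/
def ScherkenoidBVP (α w : ℝ) (u : ℝ × ℝ → ℝ) : Prop :=
  IsTranslatorOn (OmegaReg α w) u ∧
  (∀ x : ℝ, 0 < x → Tendsto u (nhdsWithin (x, 0) (OmegaReg α w)) atBot) ∧
  (∀ x : ℝ, w * Real.cos α / Real.sin α < x →
      Tendsto u (nhdsWithin (x, w) (OmegaReg α w)) atBot) ∧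
  (∀ y : ℝ, 0 < y → y < w →
      Tendsto u (nhdsWithin (y * Real.cos α / Real.sin α, y) (OmegaReg α w)) atTop)

/-- The full strip `ℝ × (0, w)`. -/
def TStrip (w : ℝ) : Set (ℝ × ℝ) := {p | 0 < p.2 ∧ p.2 < w}

/-- The half strip `(0,∞) × (0, w)`. -/
def THalfStrip (w : ℝ) : Set (ℝ × ℝ) := {p | 0 < p.1 ∧ 0 < p.2 ∧ p.2 < w}

/-- A pitchfork function of width `w`: a translator on `ℝ × (0,w)` with boundary value
`+∞` at `(x,0)` for `x < 0`, `−∞` at `(x,0)` for `x > 0`, and `−∞` at `(x,w)` for all `x`. -/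
def IsPitchfork (w : ℝ) (u : ℝ × ℝ → ℝ) : Prop :=
  IsTranslatorOn (TStrip w) u ∧
  (∀ x : ℝ, x < 0 → Tendsto u (nhdsWithin (x, 0) (TStrip w)) atTop) ∧
  (∀ x : ℝ, 0 < x → Tendsto u (nhdsWithin (x, 0) (TStrip w)) atBot) ∧
  (∀ x : ℝ, Tendsto u (nhdsWithin (x, w) (TStrip w)) atBot)

/-- The downward-tilted grim reaper `g_w` of width `w ≥ π`, normalized by `g_w(0,w/2) = 0`. -/
def grimTilt (w : ℝ) (p : ℝ × ℝ) : ℝ :=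
  (w / π) ^ 2 * Real.log (Real.sin (π * p.2 / w)) - p.1 * Real.sqrt ((w / π) ^ 2 - 1)

/-!
Writing `W = √(1 + |∇u|²)`, the translator equation reads `div (∇u / W) = 1 / W`. Multiply the
difference of the equations for `u` and `v` by `E(u) - E(v)`, where `E` is a truncation of the
exponential that is constant near `±∞`. The resulting flux vanishes near the sides, because `u` and
`v` have the same infinite boundary values, and small discs around the corners can be cut off at
negligible cost. Since `(∇u / W_u - ∇v / W_v) · ∇u = W_u (1 - ⟨ν_u, ν_v⟩) - (1 / W_u - 1 / W_v)`
in terms of the unit normals, and `E' = E` where nothing is truncated, the divergence theorem and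
dominated convergence leave `∫ e^u (1 - ⟨ν_u, ν_v⟩) ≤ 0`, so the normals agree.

The domination needs `e^u` to be integrable. Near a side with boundary value `+∞`, at distance `d`,
comparison with a barrier of the form `-k log d` plus a quadratic, where `k < 1`, gives
`e^u ≤ C d^(-k)`.
-/

open scoped ContDiff Topology

section PartialDerivatives

variable {u v : ℝ × ℝ → ℝ} {p : ℝ × ℝ} {m n : WithTop ℕ∞}

theorem fderiv_apply_eq_pdx_pdy (u : ℝ × ℝ → ℝ) (p e : ℝ × ℝ) :
    fderiv ℝ u p e = e.1 * pdx u p + e.2 * pdy u p := by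
  have he : e = e.1 • ((1 : ℝ), (0 : ℝ)) + e.2 • ((0 : ℝ), (1 : ℝ)) := by ext <;> simp
  conv_lhs => rw [he, map_add, map_smul, map_smul]
  rfl

theorem contDiffAt_pdx (h : ContDiffAt ℝ n u p) (hmn : m + 1 ≤ n) :
    ContDiffAt ℝ m (pdx u) p :=
  (h.fderiv_right hmn).clm_apply contDiffAt_const

theorem contDiffAt_pdy (h : ContDiffAt ℝ n u p) (hmn : m + 1 ≤ n) :
    ContDiffAt ℝ m (pdy u) p :=
  (h.fderiv_right hmn).clm_apply contDiffAt_const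

/-- The second derivative of `u` at `p` as a bilinear form. -/
def hessian {E : Type*} [NormedAddCommGroup E] [NormedSpace ℝ E] (u : E → ℝ) (p : E) :
    E →L[ℝ] E →L[ℝ] ℝ :=
  fderiv ℝ (fderiv ℝ u) p

theorem fderiv_fderiv_apply {E : Type*} [NormedAddCommGroup E] [NormedSpace ℝ E] {u : E → ℝ}
    {p : E} (h : ContDiffAt ℝ 2 u p) (e e' : E) :
    fderiv ℝ (fun q => fderiv ℝ u q e) p e' = hessian u p e' e := by
  have hd : DifferentiableAt ℝ (fderiv ℝ u) p :=
    (h.fderiv_right (m := 1) le_rfl).differentiableAt one_ne_zero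
  rw [(hd.hasFDerivAt.clm_apply (hasFDerivAt_const e p)).fderiv]
  simp [hessian]

theorem hessian_comm {E : Type*} [NormedAddCommGroup E] [NormedSpace ℝ E] {u : E → ℝ} {p : E}
    (h : ContDiffAt ℝ 2 u p) (e e' : E) : hessian u p e e' = hessian u p e' e :=
  (h.isSymmSndFDerivAt (by simp)).eq e e'

theorem pdx_pdx_eq_hessian (h : ContDiffAt ℝ 2 u p) :
    pdx (pdx u) p = hessian u p (1, 0) (1, 0) :=
  fderiv_fderiv_apply h _ _

theorem pdy_pdx_eq_hessian (h : ContDiffAt ℝ 2 u p) :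
    pdy (pdx u) p = hessian u p (0, 1) (1, 0) :=
  fderiv_fderiv_apply h _ _

theorem pdy_pdy_eq_hessian (h : ContDiffAt ℝ 2 u p) :
    pdy (pdy u) p = hessian u p (0, 1) (0, 1) :=
  fderiv_fderiv_apply h _ _

theorem pdx_pdy_comm (h : ContDiffAt ℝ 2 u p) : pdx (pdy u) p = pdy (pdx u) p := by
  rw [pdy_pdx_eq_hessian h, hessian_comm h, ← fderiv_fderiv_apply h]
  rfl

end PartialDerivatives

section Divergence

variable {f : ℝ × ℝ → ℝ} {X Y : ℝ × ℝ → ℝ × ℝ} {p : ℝ × ℝ}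

/-- The divergence of a planar vector field. -/
def divergence (X : ℝ × ℝ → ℝ × ℝ) (p : ℝ × ℝ) : ℝ :=
  pdx (fun q => (X q).1) p + pdy (fun q => (X q).2) p

theorem divergence_sub (hX : DifferentiableAt ℝ X p) (hY : DifferentiableAt ℝ Y p) :
    divergence (fun q => X q - Y q) p = divergence X p - divergence Y p := by
  simp only [divergence, pdx, pdy, Prod.fst_sub, Prod.snd_sub]
  rw [fderiv_fun_sub hX.fst hY.fst, fderiv_fun_sub hX.snd hY.snd]
  simp only [sub_apply]
  ring

theorem divergence_smul (hf : DifferentiableAt ℝ f p) (hX : DifferentiableAt ℝ X p) :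
    divergence (fun q => f q • X q) p = f p * divergence X p + fderiv ℝ f p (X p) := by
  rw [fderiv_apply_eq_pdx_pdy]
  simp only [divergence, pdx, pdy, Prod.smul_fst, Prod.smul_snd, smul_eq_mul]
  rw [fderiv_fun_mul hf hX.fst, fderiv_fun_mul hf hX.snd]
  simp only [add_apply, smul_apply, smul_eq_mul]
  ring

end Divergence

section AreaElement

variable {u v : ℝ × ℝ → ℝ} {p : ℝ × ℝ} {m n : WithTop ℕ∞}

/-- The area element `W = √(1 + |∇u|²)` of the graph of `u`. -/
def areaElement (u : ℝ × ℝ → ℝ) (p : ℝ × ℝ) : ℝ := √(1 + pdx u p ^ 2 + pdy u p ^ 2)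

/-- The field `∇u / W`, i.e. minus the horizontal part of the upward unit normal of the graph. -/
def normalizedGrad (u : ℝ × ℝ → ℝ) (p : ℝ × ℝ) : ℝ × ℝ :=
  (areaElement u p)⁻¹ • (pdx u p, pdy u p)

/-- The minimal surface operator `(1 + u_y²) u_xx - 2 u_x u_y u_xy + (1 + u_x²) u_yy`. -/
def minimalSurfaceOp (u : ℝ × ℝ → ℝ) (p : ℝ × ℝ) : ℝ :=
  (1 + pdy u p ^ 2) * pdx (pdx u) p - 2 * pdx u p * pdy u p * pdy (pdx u) p
    + (1 + pdx u p ^ 2) * pdy (pdy u) p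

theorem areaElement_sq (u : ℝ × ℝ → ℝ) (p : ℝ × ℝ) :
    areaElement u p ^ 2 = 1 + pdx u p ^ 2 + pdy u p ^ 2 :=
  Real.sq_sqrt (by positivity)

theorem one_le_areaElement (u : ℝ × ℝ → ℝ) (p : ℝ × ℝ) : 1 ≤ areaElement u p :=
  Real.one_le_sqrt.2 (by nlinarith [sq_nonneg (pdx u p), sq_nonneg (pdy u p)])

theorem areaElement_pos (u : ℝ × ℝ → ℝ) (p : ℝ × ℝ) : 0 < areaElement u p :=
  one_pos.trans_le (one_le_areaElement u p)

theorem areaElement_congr (h : fderiv ℝ u p = fderiv ℝ v p) :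
    areaElement u p = areaElement v p := by
  simp only [areaElement, pdx, pdy, h]

theorem abs_inv_areaElement_sub_inv_le (u v : ℝ × ℝ → ℝ) (p : ℝ × ℝ) :
    |(areaElement u p)⁻¹ - (areaElement v p)⁻¹| ≤ 1 :=
  abs_sub_le_of_nonneg_of_le (inv_nonneg.2 (areaElement_pos u p).le)
    (inv_le_one_of_one_le₀ (one_le_areaElement u p)) (inv_nonneg.2 (areaElement_pos v p).le)
    (inv_le_one_of_one_le₀ (one_le_areaElement v p))

theorem norm_normalizedGrad_le_one (u : ℝ × ℝ → ℝ) (p : ℝ × ℝ) : ‖normalizedGrad u p‖ ≤ 1 := by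
  have hW := areaElement_pos u p
  rw [normalizedGrad, norm_smul, norm_inv, Real.norm_of_nonneg hW.le, inv_mul_le_one₀ hW,
    Prod.norm_mk, max_le_iff]
  constructor <;> refine abs_le_of_sq_le_sq ?_ hW.le <;> rw [areaElement_sq] <;>
    nlinarith [sq_nonneg (pdx u p), sq_nonneg (pdy u p)]

theorem contDiffAt_areaElement (h : ContDiffAt ℝ n u p) (hmn : m + 1 ≤ n) :
    ContDiffAt ℝ m (areaElement u) p :=
  ((contDiffAt_const.add ((contDiffAt_pdx h hmn).pow 2)).add ((contDiffAt_pdy h hmn).pow 2)).sqrt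
    (by positivity)

theorem contDiffAt_normalizedGrad (h : ContDiffAt ℝ n u p) (hmn : m + 1 ≤ n) :
    ContDiffAt ℝ m (normalizedGrad u) p :=
  ((contDiffAt_areaElement h hmn).inv (areaElement_pos u p).ne').smul
    ((contDiffAt_pdx h hmn).prodMk (contDiffAt_pdy h hmn))

theorem fderiv_areaElement (h : ContDiffAt ℝ 2 u p) (e : ℝ × ℝ) :
    fderiv ℝ (areaElement u) p e = (areaElement u p)⁻¹ *
      (pdx u p * fderiv ℝ (pdx u) p e + pdy u p * fderiv ℝ (pdy u) p e) := by
  have hx : DifferentiableAt ℝ (pdx u) p := (contDiffAt_pdx h le_rfl).differentiableAt one_ne_zero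
  have hy : DifferentiableAt ℝ (pdy u) p := (contDiffAt_pdy h le_rfl).differentiableAt one_ne_zero
  have hpos : 1 + pdx u p ^ 2 + pdy u p ^ 2 ≠ 0 := by positivity
  have hW : HasFDerivAt (areaElement u) _ p :=
    (((hx.hasFDerivAt.pow 2).const_add 1).add (hy.hasFDerivAt.pow 2)).sqrt hpos
  rw [hW.fderiv]
  simp only [areaElement, Pi.add_apply, add_apply, smul_apply, smul_eq_mul, nsmul_eq_mul]
  field_simp
  ring

theorem divergence_normalizedGrad (h : ContDiffAt ℝ 2 u p) :
    divergence (normalizedGrad u) p = minimalSurfaceOp u p / areaElement u p ^ 3 := by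
  have hW : DifferentiableAt ℝ (areaElement u) p :=
    (contDiffAt_areaElement h le_rfl).differentiableAt one_ne_zero
  have hX : DifferentiableAt ℝ (fun q => (pdx u q, pdy u q)) p :=
    ((contDiffAt_pdx h le_rfl).prodMk (contDiffAt_pdy h le_rfl)).differentiableAt one_ne_zero
  have hW0 := (areaElement_pos u p).ne'
  have hinv : fderiv ℝ (fun q => (areaElement u q)⁻¹) p
      = (-(areaElement u p ^ 2)⁻¹) • fderiv ℝ (areaElement u) p :=
    ((hasDerivAt_inv hW0).comp_hasFDerivAt p hW.hasFDerivAt).fderiv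
  have hdiv : divergence (fun q => (pdx u q, pdy u q)) p = pdx (pdx u) p + pdy (pdy u) p := rfl
  unfold normalizedGrad
  rw [divergence_smul (hW.fun_inv hW0) hX, hinv, smul_apply, smul_eq_mul,
    fderiv_areaElement h, fderiv_apply_eq_pdx_pdy, fderiv_apply_eq_pdx_pdy, hdiv,
    pdx_pdy_comm h]
  field_simp
  rw [areaElement_sq, minimalSurfaceOp]
  ring

end AreaElement

section NormalGap

variable {u v : ℝ × ℝ → ℝ} {p : ℝ × ℝ}

/-- Half the squared distance `|ν_u - ν_v|² / 2 = 1 - ⟨ν_u, ν_v⟩` between the upward unit normals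
of the graphs of `u` and `v` over the point `p`. -/
def normalGap (u v : ℝ × ℝ → ℝ) (p : ℝ × ℝ) : ℝ :=
  (((normalizedGrad u p).1 - (normalizedGrad v p).1) ^ 2
    + ((normalizedGrad u p).2 - (normalizedGrad v p).2) ^ 2
    + ((areaElement u p)⁻¹ - (areaElement v p)⁻¹) ^ 2) / 2

theorem normalGap_nonneg (u v : ℝ × ℝ → ℝ) (p : ℝ × ℝ) : 0 ≤ normalGap u v p := by
  unfold normalGap
  positivity

theorem normalGap_comm (u v : ℝ × ℝ → ℝ) (p : ℝ × ℝ) : normalGap u v p = normalGap v u p := by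
  unfold normalGap
  ring

theorem areaElement_mul_normalGap (u v : ℝ × ℝ → ℝ) (p : ℝ × ℝ) :
    areaElement u p * areaElement v p * (1 - normalGap u v p)
      = 1 + pdx u p * pdx v p + pdy u p * pdy v p := by
  have hu := areaElement_sq u p
  have hv := areaElement_sq v p
  have hu0 := (areaElement_pos u p).ne'
  have hv0 := (areaElement_pos v p).ne'
  simp only [normalGap, normalizedGrad, Prod.smul_fst, Prod.smul_snd, smul_eq_mul]
  field_simp
  linear_combination (areaElement v p ^ 2) * hu + (areaElement u p ^ 2) * hv

theorem normalGap_le_two (u v : ℝ × ℝ → ℝ) (p : ℝ × ℝ) : normalGap u v p ≤ 2 := by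
  have hu := areaElement_pos u p
  have hv := areaElement_pos v p
  have hcs : -(1 + pdx u p * pdx v p + pdy u p * pdy v p) ≤ areaElement u p * areaElement v p := by
    refine le_of_sq_le_sq ?_ (by positivity)
    rw [mul_pow, areaElement_sq, areaElement_sq]
    nlinarith [sq_nonneg (pdx u p - pdx v p), sq_nonneg (pdy u p - pdy v p),
      sq_nonneg (pdx u p * pdy v p - pdy u p * pdx v p)]
  rw [← areaElement_mul_normalGap] at hcs
  nlinarith [mul_pos hu hv]

theorem continuousAt_normalGap (hu : ContDiffAt ℝ 1 u p) (hv : ContDiffAt ℝ 1 v p) :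
    ContinuousAt (normalGap u v) p := by
  have hX := fun {w} (hw : ContDiffAt ℝ 1 w p) =>
    (contDiffAt_normalizedGrad (m := 0) hw (by simp)).continuousAt
  have hW := fun {w} (hw : ContDiffAt ℝ 1 w p) =>
    (contDiffAt_areaElement (m := 0) hw (by simp)).continuousAt.inv₀ (areaElement_pos w p).ne'
  exact (((((hX hu).fst.sub (hX hv).fst).pow 2).add (((hX hu).snd.sub (hX hv).snd).pow 2)).add
    (((hW hu).sub (hW hv)).pow 2)).div_const 2

theorem fderiv_eq_of_normalGap_eq_zero (h : normalGap u v p = 0) : fderiv ℝ u p = fderiv ℝ v p := by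
  have hW : areaElement u p = areaElement v p := by
    rw [← inv_inj]
    unfold normalGap at h
    nlinarith [sq_nonneg ((normalizedGrad u p).1 - (normalizedGrad v p).1),
      sq_nonneg ((normalizedGrad u p).2 - (normalizedGrad v p).2)]
  have hgrad := areaElement_mul_normalGap u v p
  have hu := areaElement_sq u p
  have hv := areaElement_sq v p
  rw [h, hW] at hgrad
  rw [hW] at hu
  have hdist : (pdx u p - pdx v p) ^ 2 + (pdy u p - pdy v p) ^ 2 = 0 := by linarith
  obtain ⟨hx, hy⟩ := (add_eq_zero_iff_of_nonneg (sq_nonneg _) (sq_nonneg _)).1 hdist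
  ext <;> simp only [ContinuousLinearMap.comp_apply, fderiv_apply_eq_pdx_pdy,
    sub_eq_zero.1 (pow_eq_zero_iff two_ne_zero |>.1 hx),
    sub_eq_zero.1 (pow_eq_zero_iff two_ne_zero |>.1 hy)]

theorem fderiv_normalizedGrad_sub (u v : ℝ × ℝ → ℝ) (p : ℝ × ℝ) :
    fderiv ℝ u p (normalizedGrad u p - normalizedGrad v p)
      = areaElement u p * normalGap u v p - ((areaElement u p)⁻¹ - (areaElement v p)⁻¹) := by
  have hu0 := (areaElement_pos u p).ne'
  have hv0 := (areaElement_pos v p).ne'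
  have hgap : areaElement u p * normalGap u v p = areaElement u p
      - (1 + pdx u p * pdx v p + pdy u p * pdy v p) / areaElement v p := by
    rw [← areaElement_mul_normalGap]
    field_simp
    ring
  rw [hgap, fderiv_apply_eq_pdx_pdy]
  simp only [normalizedGrad, Prod.fst_sub, Prod.snd_sub, Prod.smul_fst, Prod.smul_snd, smul_eq_mul]
  field_simp
  linear_combination (-areaElement v p) * areaElement_sq u p

end NormalGap

section TruncatedExponential

variable (χ : ContDiffBump (0 : ℝ)) {s t : ℝ}

/-- The primitive of `exp * χ` with value `1` at `0`: a `C¹` truncation of the exponential that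
agrees with it where `χ = 1` and is constant where `χ = 0`. -/
def truncExp (t : ℝ) : ℝ := 1 + ∫ z in (0 : ℝ)..t, rexp z * χ z

theorem continuous_exp_mul_bump : Continuous fun z => rexp z * χ z :=
  Real.continuous_exp.mul χ.continuous

theorem hasDerivAt_truncExp (t : ℝ) : HasDerivAt (truncExp χ) (rexp t * χ t) t :=
  ((continuous_exp_mul_bump χ).integral_hasStrictDerivAt 0 t).hasDerivAt.const_add 1

theorem deriv_truncExp (t : ℝ) : deriv (truncExp χ) t = rexp t * χ t :=
  (hasDerivAt_truncExp χ t).deriv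

theorem differentiable_truncExp : Differentiable ℝ (truncExp χ) := fun t =>
  (hasDerivAt_truncExp χ t).differentiableAt

theorem deriv_truncExp_nonneg (t : ℝ) : 0 ≤ deriv (truncExp χ) t :=
  deriv_truncExp χ t ▸ mul_nonneg (exp_pos t).le χ.nonneg

theorem deriv_truncExp_le (t : ℝ) : deriv (truncExp χ) t ≤ rexp t :=
  deriv_truncExp χ t ▸ mul_le_of_le_one_right (exp_pos t).le χ.le_one

theorem contDiff_truncExp : ContDiff ℝ 1 (truncExp χ) :=
  contDiff_one_iff_deriv.2 ⟨differentiable_truncExp χ, by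
    simpa only [funext (deriv_truncExp χ)] using continuous_exp_mul_bump χ⟩

theorem truncExp_sub_truncExp (s t : ℝ) :
    truncExp χ t - truncExp χ s = ∫ z in s..t, rexp z * χ z := by
  have hint := (continuous_exp_mul_bump χ).intervalIntegrable (μ := volume)
  rw [truncExp, truncExp, add_sub_add_left_eq_sub,
    intervalIntegral.integral_interval_sub_left (hint _ _) (hint _ _)]

theorem truncExp_zero : truncExp χ 0 = 1 := by
  rw [truncExp, intervalIntegral.integral_same, add_zero]

theorem truncExp_eq_exp (h : |t| ≤ χ.rIn) : truncExp χ t = rexp t := by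
  have hχ : EqOn (fun z => rexp z * χ z) rexp (uIcc 0 t) := fun z hz => by
    have hzt : |z| ≤ |t| := by simpa using abs_sub_left_of_mem_uIcc hz
    simp only [χ.one_of_mem_closedBall (mem_closedBall_zero_iff.2 (hzt.trans h)), mul_one]
  rw [truncExp, intervalIntegral.integral_congr hχ, integral_exp, exp_zero]
  ring

theorem truncExp_congr (h : ∀ z ∈ uIcc s t, χ.rOut ≤ |z|) : truncExp χ s = truncExp χ t := by
  have hχ : EqOn (fun z => rexp z * χ z) 0 (uIcc s t) := fun z hz => by
    have hz0 : χ.rOut ≤ dist z 0 := (h z hz).trans_eq (Real.dist_0_eq_abs z).symm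
    simp only [χ.zero_of_le_dist hz0, mul_zero, Pi.zero_apply]
  rw [eq_comm, ← sub_eq_zero, truncExp_sub_truncExp, intervalIntegral.integral_congr hχ]
  exact intervalIntegral.integral_zero

theorem truncExp_congr_of_rOut_le (hs : χ.rOut ≤ s) (ht : χ.rOut ≤ t) :
    truncExp χ s = truncExp χ t :=
  truncExp_congr χ fun z hz => ((le_min hs ht).trans hz.1).trans (le_abs_self z)

theorem truncExp_congr_of_le_neg_rOut (hs : s ≤ -χ.rOut) (ht : t ≤ -χ.rOut) :
    truncExp χ s = truncExp χ t :=
  truncExp_congr χ fun z hz => (le_neg_of_le_neg (hz.2.trans (max_le hs ht))).trans (neg_le_abs z)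

theorem monotone_truncExp : Monotone (truncExp χ) :=
  monotone_of_deriv_nonneg (differentiable_truncExp χ) (deriv_truncExp_nonneg χ)

theorem antitone_truncExp_sub_exp : Antitone fun t => truncExp χ t - rexp t :=
  antitone_of_deriv_nonpos ((differentiable_truncExp χ).sub Real.differentiable_exp) fun t => by
    rw [deriv_fun_sub (differentiable_truncExp χ t) Real.differentiableAt_exp, Real.deriv_exp]
    exact sub_nonpos.2 (deriv_truncExp_le χ t)

theorem truncExp_nonneg (t : ℝ) : 0 ≤ truncExp χ t := by
  have h0 := truncExp_zero χ
  rcases le_total 0 t with ht | ht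
  · linarith [monotone_truncExp χ ht]
  · have h := antitone_truncExp_sub_exp χ ht
    simp only [h0, exp_zero] at h
    linarith [exp_pos t]

theorem truncExp_le (t : ℝ) : truncExp χ t ≤ 1 + rexp t := by
  have h0 := truncExp_zero χ
  rcases le_total 0 t with ht | ht
  · have h := antitone_truncExp_sub_exp χ ht
    simp only [h0, exp_zero] at h
    linarith
  · linarith [monotone_truncExp χ ht, exp_pos t]

theorem truncExp_le_one_add_exp_rOut (t : ℝ) : truncExp χ t ≤ 1 + rexp χ.rOut := by
  rcases le_total t χ.rOut with ht | ht
  · exact (monotone_truncExp χ ht).trans (truncExp_le χ _)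
  · exact (truncExp_congr_of_rOut_le χ ht le_rfl).trans_le (truncExp_le χ _)

theorem truncExp_sub_deriv_eq_zero (h : |t| ≤ χ.rIn) :
    truncExp χ t - deriv (truncExp χ) t = 0 := by
  rw [truncExp_eq_exp χ h, deriv_truncExp,
    χ.one_of_mem_closedBall (mem_closedBall_zero_iff.2 h), mul_one, sub_self]

theorem abs_truncExp_sub_deriv_le (t : ℝ) :
    |truncExp χ t - deriv (truncExp χ) t| ≤ 1 + rexp t :=
  abs_sub_le_of_nonneg_of_le (truncExp_nonneg χ t) (truncExp_le χ t) (deriv_truncExp_nonneg χ t)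
    ((deriv_truncExp_le χ t).trans (le_add_of_nonneg_left zero_le_one))

end TruncatedExponential

section Flux

variable {Ω : Set (ℝ × ℝ)} {u v ζ : ℝ × ℝ → ℝ} {E : ℝ → ℝ} {M : ℝ} {p : ℝ × ℝ}

theorem IsTranslatorOn.contDiffAt (hu : IsTranslatorOn Ω u) (hΩ : IsOpen Ω) (hp : p ∈ Ω) :
    ContDiffAt ℝ ∞ u p :=
  hu.1.contDiffAt (hΩ.mem_nhds hp)

theorem IsTranslatorOn.differentiableAt (hu : IsTranslatorOn Ω u) (hΩ : IsOpen Ω) (hp : p ∈ Ω) :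
    DifferentiableAt ℝ u p :=
  (hu.contDiffAt hΩ hp).differentiableAt (by simp)

theorem IsTranslatorOn.minimalSurfaceOp_eq (hu : IsTranslatorOn Ω u) (hp : p ∈ Ω) :
    minimalSurfaceOp u p = areaElement u p ^ 2 :=
  (hu.2 p hp).trans (areaElement_sq u p).symm

theorem IsTranslatorOn.divergence_normalizedGrad (hu : IsTranslatorOn Ω u) (hΩ : IsOpen Ω)
    (hp : p ∈ Ω) : divergence (normalizedGrad u) p = (areaElement u p)⁻¹ := by
  have hW := (areaElement_pos u p).ne'
  rw [_root_.divergence_normalizedGrad ((hu.contDiffAt hΩ hp).of_le (by norm_cast)),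
    hu.minimalSurfaceOp_eq hp]
  field_simp

/-- The vector field `(E(u) - E(v)) (∇u / W_u - ∇v / W_v)`, whose divergence detects where the
unit normals of two translators differ. -/
def fluxField (E : ℝ → ℝ) (u v : ℝ × ℝ → ℝ) (p : ℝ × ℝ) : ℝ × ℝ :=
  (E (u p) - E (v p)) • (normalizedGrad u p - normalizedGrad v p)

theorem contDiffAt_fluxField (hE : ContDiff ℝ 1 E) (hu : ContDiffAt ℝ 2 u p)
    (hv : ContDiffAt ℝ 2 v p) : ContDiffAt ℝ 1 (fluxField E u v) p :=
  ((hE.contDiffAt.comp p (hu.of_le one_le_two)).sub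
    (hE.contDiffAt.comp p (hv.of_le one_le_two))).smul
    ((contDiffAt_normalizedGrad hu le_rfl).sub (contDiffAt_normalizedGrad hv le_rfl))

theorem norm_fluxField_le (hM : ∀ t, E t ∈ Icc 0 M) (u v : ℝ × ℝ → ℝ) (p : ℝ × ℝ) :
    ‖fluxField E u v p‖ ≤ 2 * M := by
  have hE : |E (u p) - E (v p)| ≤ M :=
    abs_sub_le_of_nonneg_of_le (hM _).1 (hM _).2 (hM _).1 (hM _).2
  have hX : ‖normalizedGrad u p - normalizedGrad v p‖ ≤ 2 :=
    (norm_sub_le_of_le (norm_normalizedGrad_le_one u p) (norm_normalizedGrad_le_one v p)).trans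
      one_add_one_eq_two.le
  rw [fluxField, norm_smul, mul_comm]
  exact mul_le_mul hX hE (norm_nonneg _) zero_le_two

theorem divergence_fluxField (hΩ : IsOpen Ω) (hu : IsTranslatorOn Ω u) (hv : IsTranslatorOn Ω v)
    (hE : Differentiable ℝ E) (hp : p ∈ Ω) :
    divergence (fluxField E u v) p
      = (deriv E (u p) * areaElement u p + deriv E (v p) * areaElement v p) * normalGap u v p
        + ((E (u p) - deriv E (u p)) - (E (v p) - deriv E (v p))) *
          ((areaElement u p)⁻¹ - (areaElement v p)⁻¹) := by
  have hEw : ∀ {w}, IsTranslatorOn Ω w →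
      HasFDerivAt (fun q => E (w q)) (deriv E (w p) • fderiv ℝ w p) p := fun hw =>
    (hE _).hasDerivAt.comp_hasFDerivAt p (hw.differentiableAt hΩ hp).hasFDerivAt
  have hX : ∀ {w}, IsTranslatorOn Ω w → DifferentiableAt ℝ (normalizedGrad w) p := fun hw =>
    (contDiffAt_normalizedGrad (m := 1) (hw.contDiffAt hΩ hp) (by norm_cast)).differentiableAt
      one_ne_zero
  have hdiff := (hEw hu).fun_sub (hEw hv)
  have hflip : fderiv ℝ v p (normalizedGrad u p - normalizedGrad v p)
      = -fderiv ℝ v p (normalizedGrad v p - normalizedGrad u p) := by rw [← map_neg, neg_sub]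
  unfold fluxField
  rw [divergence_smul hdiff.differentiableAt ((hX hu).fun_sub (hX hv)),
    divergence_sub (hX hu) (hX hv), hu.divergence_normalizedGrad hΩ hp,
    hv.divergence_normalizedGrad hΩ hp, hdiff.fderiv]
  simp only [sub_apply, smul_apply, smul_eq_mul]
  rw [hflip, fderiv_normalizedGrad_sub, fderiv_normalizedGrad_sub, normalGap_comm v u]
  ring

/-- The failure of `E` to solve `E' = E`, compared along `u` and `v`: the error term in the flux
inequality. -/
def expDefect (E : ℝ → ℝ) (u v : ℝ × ℝ → ℝ) (p : ℝ × ℝ) : ℝ :=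
  |(E (u p) - deriv E (u p)) - (E (v p) - deriv E (v p))|

theorem le_divergence_smul_fluxField (hΩ : IsOpen Ω) (hu : IsTranslatorOn Ω u)
    (hv : IsTranslatorOn Ω v) (hE : ContDiff ℝ 1 E) (hE' : ∀ t, 0 ≤ deriv E t)
    (hM : ∀ t, E t ∈ Icc 0 M) (hζ : DifferentiableAt ℝ ζ p) (hζp : ζ p ∈ Icc 0 1) (hp : p ∈ Ω) :
    ζ p * (deriv E (u p) * normalGap u v p) - expDefect E u v p - 2 * M * ‖fderiv ℝ ζ p‖
    ≤ divergence (fun q => ζ q • fluxField E u v q) p := by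
  have hflux : DifferentiableAt ℝ (fluxField E u v) p :=
    (contDiffAt_fluxField hE ((hu.contDiffAt hΩ hp).of_le (by norm_cast))
      ((hv.contDiffAt hΩ hp).of_le (by norm_cast))).differentiableAt one_ne_zero
  rw [divergence_smul hζ hflux, divergence_fluxField hΩ hu hv (hE.differentiable one_ne_zero) hp,
    expDefect]
  set D := (E (u p) - deriv E (u p)) - (E (v p) - deriv E (v p))
  set R := (areaElement u p)⁻¹ - (areaElement v p)⁻¹
  have hgap : ζ p * (deriv E (u p) * normalGap u v p) ≤
      ζ p * ((deriv E (u p) * areaElement u p + deriv E (v p) * areaElement v p)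
        * normalGap u v p) := by
    refine mul_le_mul_of_nonneg_left
      (mul_le_mul_of_nonneg_right ?_ (normalGap_nonneg u v p)) hζp.1
    exact le_add_of_le_of_nonneg (le_mul_of_one_le_right (hE' _) (one_le_areaElement u p))
      (mul_nonneg (hE' _) (areaElement_pos v p).le)
  have hdefect : |ζ p * (D * R)| ≤ |D| := by
    rw [abs_mul, abs_mul, abs_of_nonneg hζp.1]
    exact (mul_le_of_le_one_left (by positivity) hζp.2).trans
      (mul_le_of_le_one_right (abs_nonneg D) (abs_inv_areaElement_sub_inv_le u v p))
  have hcutoff : |fderiv ℝ ζ p (fluxField E u v p)| ≤ 2 * M * ‖fderiv ℝ ζ p‖ := by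
    rw [mul_comm]
    exact (fderiv ℝ ζ p).le_opNorm_of_le (norm_fluxField_le hM u v p)
  rw [mul_add]
  linarith [neg_le_of_abs_le hdefect, neg_le_of_abs_le hcutoff]

end Flux

section DivergenceTheorem

theorem indicator_eventuallyEq_zero {X Y : Type*} [TopologicalSpace X] [Zero Y] {P : Set X}
    {f : X → Y} {p : X} (h0 : ∀ q ∈ frontier P, ∀ᶠ x in 𝓝[P] q, f x = 0) (hp : p ∉ P) :
    P.indicator f =ᶠ[𝓝 p] 0 := by
  by_cases hc : p ∈ closure P
  · have hev := h0 p ⟨hc, fun h => hp (interior_subset h)⟩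
    filter_upwards [eventually_nhdsWithin_iff.1 hev] with q hq
    exact indicator_apply_eq_zero.2 hq
  · filter_upwards [isClosed_closure.isOpen_compl.mem_nhds hc] with q hq
    exact indicator_of_notMem (fun h => hq (subset_closure h)) f

variable {E F : Type*} [NormedAddCommGroup E] [NormedSpace ℝ E] [NormedAddCommGroup F]
  [NormedSpace ℝ F] {P : Set E} {f : E → F} {n : WithTop ℕ∞}

theorem contDiff_indicator (hP : IsOpen P) (hf : ContDiffOn ℝ n f P)
    (h0 : ∀ q ∈ frontier P, ∀ᶠ x in 𝓝[P] q, f x = 0) : ContDiff ℝ n (P.indicator f) :=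
  contDiff_iff_contDiffAt.2 fun p => by
    by_cases hp : p ∈ P
    · exact (hf.contDiffAt (hP.mem_nhds hp)).congr_of_eventuallyEq
        ((eqOn_indicator (f := f)).eventuallyEq_of_mem (hP.mem_nhds hp))
    · exact contDiffAt_const.congr_of_eventuallyEq (indicator_eventuallyEq_zero h0 hp)

theorem fderiv_indicator (hP : IsOpen P) (h0 : ∀ q ∈ frontier P, ∀ᶠ x in 𝓝[P] q, f x = 0) :
    fderiv ℝ (P.indicator f) = P.indicator (fderiv ℝ f) := by
  ext1 p
  by_cases hp : p ∈ P
  · rw [indicator_of_mem hp,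
      ((eqOn_indicator (f := f)).eventuallyEq_of_mem (hP.mem_nhds hp)).fderiv_eq]
  · rw [indicator_of_notMem hp, (indicator_eventuallyEq_zero h0 hp).fderiv_eq, fderiv_zero,
      Pi.zero_apply]

variable [FiniteDimensional ℝ E] [MeasurableSpace E] [BorelSpace E] {μ : Measure E}
  [μ.IsAddHaarMeasure]

theorem integral_fderiv_eq_zero (hf : ContDiff ℝ 1 f) (hs : HasCompactSupport f) (e : E) :
    ∫ p, fderiv ℝ f p e ∂μ = 0 := by
  have hint : Integrable (fun p => fderiv ℝ f p e) μ :=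
    ((hf.continuous_fderiv one_ne_zero).clm_apply continuous_const).integrable_of_hasCompactSupport
      (hs.fderiv_apply (𝕜 := ℝ) e)
  simpa using integral_smul_fderiv_eq_neg_fderiv_smul_of_integrable (μ := μ)
    (f := fun _ : E => (1 : ℝ)) (v := e) (by simp) (by simpa using hint)
    (by simpa using hf.continuous.integrable_of_hasCompactSupport hs)
    (fun _ _ => differentiableAt_const 1) (fun x _ => hf.differentiable one_ne_zero x)

theorem integrableOn_fderiv_and_setIntegral_eq_zero (hP : IsOpen P) (hb : Bornology.IsBounded P)
    (hf : ContDiffOn ℝ 1 f P) (h0 : ∀ q ∈ frontier P, ∀ᶠ p in 𝓝[P] q, f p = 0) (e : E) :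
    IntegrableOn (fun p => fderiv ℝ f p e) P μ ∧ ∫ p in P, fderiv ℝ f p e ∂μ = 0 := by
  have hg : ContDiff ℝ 1 (P.indicator f) := contDiff_indicator hP hf h0
  have hgs : HasCompactSupport (P.indicator f) :=
    .intro hb.isCompact_closure fun x hx => indicator_of_notMem (fun h => hx (subset_closure h)) f
  have hfg : (fun p => fderiv ℝ (P.indicator f) p e) = P.indicator fun p => fderiv ℝ f p e := by
    rw [fderiv_indicator hP h0]
    ext p
    by_cases hp : p ∈ P <;> simp [hp]
  have hint : Integrable (fun p => fderiv ℝ (P.indicator f) p e) μ :=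
    ((hg.continuous_fderiv one_ne_zero).clm_apply continuous_const).integrable_of_hasCompactSupport
      (hgs.fderiv_apply (𝕜 := ℝ) e)
  have hzero := integral_fderiv_eq_zero (μ := μ) hg hgs e
  rw [hfg] at hint hzero
  rw [integral_indicator hP.measurableSet] at hzero
  exact ⟨(integrable_indicator_iff hP.measurableSet).1 hint, hzero⟩

theorem integrableOn_divergence_and_setIntegral_eq_zero {Ω : Set (ℝ × ℝ)}
    {X : ℝ × ℝ → ℝ × ℝ} (hΩ : IsOpen Ω) (hb : Bornology.IsBounded Ω) (hX : ContDiffOn ℝ 1 X Ω)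
    (h0 : ∀ q ∈ frontier Ω, ∀ᶠ p in 𝓝[Ω] q, X p = 0) :
    IntegrableOn (divergence X) Ω ∧ ∫ p in Ω, divergence X p = 0 := by
  obtain ⟨hx, hx0⟩ := integrableOn_fderiv_and_setIntegral_eq_zero (μ := volume) hΩ hb hX.fst
    (fun q hq => (h0 q hq).mono fun _ h => congrArg Prod.fst h) (1, 0)
  obtain ⟨hy, hy0⟩ := integrableOn_fderiv_and_setIntegral_eq_zero (μ := volume) hΩ hb hX.snd
    (fun q hq => (h0 q hq).mono fun _ h => congrArg Prod.snd h) (0, 1)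
  exact ⟨hx.add hy, (integral_add hx hy).trans (by rw [hx0, hy0, add_zero])⟩

end DivergenceTheorem

section Cutoffs

variable {E : Type*} [NormedAddCommGroup E] [NormedSpace ℝ E]

theorem norm_fderiv_comp_inv_smul_sub (f : E → ℝ) (c : E) {r : ℝ} (hr : 0 ≤ r) (p : E) :
    ‖fderiv ℝ (fun q => f (r⁻¹ • (q - c))) p‖ = r⁻¹ * ‖fderiv ℝ f (r⁻¹ • (p - c))‖ := by
  rw [fderiv_comp_sub (f := fun q => f (r⁻¹ • q)), fderiv_comp_smul, norm_smul,
    Real.norm_of_nonneg (inv_nonneg.2 hr)]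

variable [MeasurableSpace E] {μ : Measure E} {F G : Set E} {ζ η : E → ℝ} {δ ε : ℝ}

/-- `ζ` is a `C¹` function with values in `[0, 1]` that vanishes near the points of `F`, equals `1`
at distance at least `ε` from `F`, and whose gradient has `L¹` norm at most `ε`. -/
structure IsCutoff (μ : Measure E) (F : Set E) (ε : ℝ) (ζ : E → ℝ) : Prop where
  contDiff : ContDiff ℝ 1 ζ
  mem_Icc (p : E) : ζ p ∈ Icc 0 1
  eventually_eq_zero : ∀ c ∈ F, ∀ᶠ p in 𝓝 c, ζ p = 0
  eq_one : ∀ p, (∀ c ∈ F, ε ≤ dist p c) → ζ p = 1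
  integrable_norm_fderiv : Integrable (fun p => ‖fderiv ℝ ζ p‖) μ
  integral_norm_fderiv_le : ∫ p, ‖fderiv ℝ ζ p‖ ∂μ ≤ ε

theorem IsCutoff.eventually_eq_one {ι : Type*} {l : Filter ι} {r : ι → ℝ} {ζ : ι → E → ℝ}
    (hζ : ∀ n, IsCutoff μ F (r n) (ζ n)) (hr : Tendsto r l (𝓝 0)) (hF : IsClosed F) {p : E}
    (hp : p ∉ F) : ∀ᶠ n in l, ζ n p = 1 := by
  obtain ⟨ρ, hρ, hball⟩ := Metric.isOpen_iff.1 hF.isOpen_compl p hp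
  filter_upwards [hr.eventually (gt_mem_nhds hρ)] with n hn
  refine (hζ n).eq_one p fun c hc => hn.le.trans ?_
  by_contra! hlt
  exact hball (Metric.mem_ball'.2 hlt) hc

theorem IsCutoff.norm_fderiv_mul_le (hζ : IsCutoff μ F ε ζ) (hη : IsCutoff μ G δ η) (p : E) :
    ‖fderiv ℝ (fun q => ζ q * η q) p‖ ≤ ‖fderiv ℝ ζ p‖ + ‖fderiv ℝ η p‖ := by
  rw [fderiv_fun_mul (hζ.contDiff.differentiable one_ne_zero p)
    (hη.contDiff.differentiable one_ne_zero p), add_comm]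
  refine norm_add_le_of_le ?_ ?_ <;> rw [norm_smul]
  · rw [Real.norm_of_nonneg (hη.mem_Icc p).1]
    exact mul_le_of_le_one_left (norm_nonneg _) (hη.mem_Icc p).2
  · rw [Real.norm_of_nonneg (hζ.mem_Icc p).1]
    exact mul_le_of_le_one_left (norm_nonneg _) (hζ.mem_Icc p).2

theorem IsCutoff.mul [OpensMeasurableSpace E] [SecondCountableTopologyEither E ℝ]
    (hζ : IsCutoff μ F ε ζ) (hη : IsCutoff μ G δ η)
    (hε : 0 ≤ ε) (hδ : 0 ≤ δ) : IsCutoff μ (F ∪ G) (ε + δ) fun p => ζ p * η p where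
  contDiff := hζ.contDiff.mul hη.contDiff
  mem_Icc p := ⟨mul_nonneg (hζ.mem_Icc p).1 (hη.mem_Icc p).1,
    mul_le_one₀ (hζ.mem_Icc p).2 (hη.mem_Icc p).1 (hη.mem_Icc p).2⟩
  eventually_eq_zero := by
    rintro c (hc | hc)
    · exact (hζ.eventually_eq_zero c hc).mono fun p hp => mul_eq_zero_of_left hp _
    · exact (hη.eventually_eq_zero c hc).mono fun p hp => mul_eq_zero_of_right _ hp
  eq_one p hp := by
    rw [hζ.eq_one p fun c hc => (le_add_of_nonneg_right hδ).trans (hp c (.inl hc)),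
      hη.eq_one p fun c hc => (le_add_of_nonneg_left hε).trans (hp c (.inr hc)), mul_one]
  integrable_norm_fderiv :=
    (hζ.integrable_norm_fderiv.add hη.integrable_norm_fderiv).mono'
      ((hζ.contDiff.mul hη.contDiff).continuous_fderiv one_ne_zero).norm.aestronglyMeasurable
      (.of_forall fun p => (norm_norm _).trans_le (hζ.norm_fderiv_mul_le hη p))
  integral_norm_fderiv_le :=
    (integral_mono_of_nonneg (.of_forall fun _ => norm_nonneg _)
      (hζ.integrable_norm_fderiv.add hη.integrable_norm_fderiv)
      (.of_forall (hζ.norm_fderiv_mul_le hη))).trans <|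
    (integral_add hζ.integrable_norm_fderiv hη.integrable_norm_fderiv).trans_le
      (add_le_add hζ.integral_norm_fderiv_le hη.integral_norm_fderiv_le)

variable [BorelSpace E]

theorem integrable_norm_fderiv_of_hasCompactSupport [IsFiniteMeasureOnCompacts μ] {f : E → ℝ}
    (hf : ContDiff ℝ 1 f) (hs : HasCompactSupport f) : Integrable (fun p => ‖fderiv ℝ f p‖) μ :=
  (hf.continuous_fderiv one_ne_zero).norm.integrable_of_hasCompactSupport (hs.fderiv (𝕜 := ℝ)).norm

variable [FiniteDimensional ℝ E] [μ.IsAddHaarMeasure]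

theorem integrable_norm_fderiv_comp_inv_smul_sub {f : E → ℝ}
    (hf : Integrable (fun p => ‖fderiv ℝ f p‖) μ) (c : E) {r : ℝ} (hr : 0 < r) :
    Integrable (fun p => ‖fderiv ℝ (fun q => f (r⁻¹ • (q - c))) p‖) μ := by
  simp only [norm_fderiv_comp_inv_smul_sub f c hr.le]
  exact (((integrable_comp_smul_iff μ (fun p => ‖fderiv ℝ f p‖)
    (inv_ne_zero hr.ne')).2 hf).comp_sub_right c).const_mul _

theorem integral_norm_fderiv_comp_inv_smul_sub_le (hd : 2 ≤ Module.finrank ℝ E) (f : E → ℝ) (c : E)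
    {r : ℝ} (hr : r ∈ Ioc 0 1) :
    ∫ p, ‖fderiv ℝ (fun q => f (r⁻¹ • (q - c))) p‖ ∂μ ≤ r * ∫ p, ‖fderiv ℝ f p‖ ∂μ := by
  simp only [norm_fderiv_comp_inv_smul_sub f c hr.1.le]
  rw [integral_const_mul, integral_sub_right_eq_self (fun p => ‖fderiv ℝ f (r⁻¹ • p)‖) c,
    Measure.integral_comp_inv_smul_of_nonneg μ (fun p => ‖fderiv ℝ f p‖) hr.1.le, smul_eq_mul,
    ← mul_assoc]
  refine mul_le_mul_of_nonneg_right ?_ (integral_nonneg fun _ => norm_nonneg _)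
  rw [inv_mul_le_iff₀ hr.1, ← sq]
  exact pow_le_pow_of_le_one hr.1.le hr.2 hd

/-- Rescaling a bump function to size `r` multiplies the `L¹` norm of its gradient by
`r ^ (dim - 1)`, so in dimension at least two points can be cut off at arbitrarily small cost. -/
theorem exists_isCutoff_singleton (hd : 2 ≤ Module.finrank ℝ E) (c : E) (hε : 0 < ε) :
    ∃ ζ, IsCutoff μ {c} ε ζ := by
  let φ : ContDiffBump (0 : E) := ⟨1 / 2, 1, by norm_num, by norm_num⟩
  have hφ : ContDiff ℝ 1 φ := φ.contDiff
  have hφint : Integrable (fun p => ‖fderiv ℝ φ p‖) μ :=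
    integrable_norm_fderiv_of_hasCompactSupport hφ φ.hasCompactSupport
  have hI : 0 ≤ ∫ p, ‖fderiv ℝ φ p‖ ∂μ := integral_nonneg fun _ => norm_nonneg _
  set I := ∫ p, ‖fderiv ℝ φ p‖ ∂μ
  obtain ⟨r, hr0, hr⟩ := exists_between (show 0 < min 1 (ε / (I + 1)) by positivity)
  obtain ⟨hr1, hrε⟩ := lt_min_iff.1 hr
  rw [lt_div_iff₀ (by positivity), mul_add, mul_one] at hrε
  have hrI : 0 ≤ r * I := mul_nonneg hr0.le hI
  have hnorm : ∀ p, ‖r⁻¹ • (p - c)‖ = r⁻¹ * dist p c := fun p => by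
    rw [norm_smul, norm_inv, Real.norm_of_nonneg hr0.le, dist_eq_norm]
  refine ⟨fun p => 1 - φ (r⁻¹ • (p - c)), contDiff_const.sub (hφ.comp (by fun_prop)),
    fun p => ⟨sub_nonneg.2 φ.le_one, sub_le_self _ φ.nonneg⟩, ?_, fun p hp => ?_, ?_, ?_⟩
  · rintro _ rfl
    filter_upwards [Metric.closedBall_mem_nhds _ (half_pos hr0)] with p hp
    rw [φ.one_of_mem_closedBall, sub_self]
    rw [mem_closedBall_zero_iff, hnorm, inv_mul_le_iff₀ hr0]
    exact (Metric.mem_closedBall.1 hp).trans_eq (by ring)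
  · rw [φ.zero_of_le_dist, sub_zero]
    rw [dist_zero_right, hnorm, le_inv_mul_iff₀ hr0]
    linarith [hp c rfl]
  · simpa only [fderiv_const_sub, norm_neg] using
      integrable_norm_fderiv_comp_inv_smul_sub hφint c hr0
  · simp only [fderiv_const_sub, norm_neg]
    exact (integral_norm_fderiv_comp_inv_smul_sub_le hd φ c ⟨hr0, hr1.le⟩).trans (by linarith)

theorem exists_isCutoff_of_finite (hd : 2 ≤ Module.finrank ℝ E) (hF : F.Finite) (hε : 0 < ε) :
    ∃ ζ, IsCutoff μ F ε ζ := by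
  induction F, hF using Set.Finite.induction_on generalizing ε with
  | empty =>
    exact ⟨fun _ => 1, contDiff_const, fun _ => ⟨zero_le_one, le_rfl⟩, by simp, by simp, by simp,
      by simpa using hε.le⟩
  | @insert c F _ _ ih =>
    obtain ⟨ζ, hζ⟩ := exists_isCutoff_singleton (μ := μ) hd c (half_pos hε)
    obtain ⟨η, hη⟩ := ih (half_pos hε)
    exact ⟨_, add_halves ε ▸ hζ.mul hη (half_pos hε).le (half_pos hε).le⟩

end Cutoffs

section Uniqueness

variable {Ω F : Set (ℝ × ℝ)} {u v ζ : ℝ × ℝ → ℝ} {ε : ℝ}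

/-- At every point of `∂Ω` outside `F`, the functions `u` and `v` both have boundary value `-∞` or
both have boundary value `+∞`. -/
def SameInfiniteBoundary (Ω F : Set (ℝ × ℝ)) (u v : ℝ × ℝ → ℝ) : Prop :=
  ∀ q ∈ frontier Ω \ F, Tendsto u (𝓝[Ω] q) atBot ∧ Tendsto v (𝓝[Ω] q) atBot ∨
    Tendsto u (𝓝[Ω] q) atTop ∧ Tendsto v (𝓝[Ω] q) atTop

theorem eventually_fluxField_truncExp_eq_zero (χ : ContDiffBump (0 : ℝ)) {l : Filter (ℝ × ℝ)}
    (h : Tendsto u l atBot ∧ Tendsto v l atBot ∨ Tendsto u l atTop ∧ Tendsto v l atTop) :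
    ∀ᶠ p in l, fluxField (truncExp χ) u v p = 0 := by
  rcases h with ⟨hu, hv⟩ | ⟨hu, hv⟩
  · filter_upwards [hu.eventually_le_atBot (-χ.rOut), hv.eventually_le_atBot (-χ.rOut)] with p h h'
    rw [fluxField, truncExp_congr_of_le_neg_rOut χ h h', sub_self, zero_smul]
  · filter_upwards [hu.eventually_ge_atTop χ.rOut, hv.eventually_ge_atTop χ.rOut] with p h h'
    rw [fluxField, truncExp_congr_of_rOut_le χ h h', sub_self, zero_smul]

theorem deriv_truncExp_mul_normalGap_mem_Icc (χ : ContDiffBump (0 : ℝ)) (u v : ℝ × ℝ → ℝ)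
    (p : ℝ × ℝ) : deriv (truncExp χ) (u p) * normalGap u v p ∈ Icc 0 (2 * rexp (u p)) :=
  ⟨mul_nonneg (deriv_truncExp_nonneg χ _) (normalGap_nonneg u v p),
    mul_comm 2 (rexp (u p)) ▸ mul_le_mul (deriv_truncExp_le χ _) (normalGap_le_two u v p)
      (normalGap_nonneg u v p) (exp_pos _).le⟩

theorem expDefect_truncExp_le (χ : ContDiffBump (0 : ℝ)) (u v : ℝ × ℝ → ℝ) (p : ℝ × ℝ) :
    expDefect (truncExp χ) u v p ≤ (1 + rexp (u p)) + (1 + rexp (v p)) :=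
  (abs_sub _ _).trans
    (add_le_add (abs_truncExp_sub_deriv_le χ _) (abs_truncExp_sub_deriv_le χ _))

theorem expDefect_truncExp_eq_zero {χ : ContDiffBump (0 : ℝ)} {p : ℝ × ℝ} (hu : |u p| ≤ χ.rIn)
    (hv : |v p| ≤ χ.rIn) : expDefect (truncExp χ) u v p = 0 := by
  rw [expDefect, truncExp_sub_deriv_eq_zero χ hu, truncExp_sub_deriv_eq_zero χ hv, sub_self,
    abs_zero]

theorem aestronglyMeasurable_expDefect_truncExp (χ : ContDiffBump (0 : ℝ)) (hΩ : IsOpen Ω)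
    (hu : ContinuousOn u Ω) (hv : ContinuousOn v Ω) :
    AEStronglyMeasurable (expDefect (truncExp χ) u v) (volume.restrict Ω) := by
  have hcont : Continuous fun t => truncExp χ t - deriv (truncExp χ) t :=
    (contDiff_truncExp χ).continuous.sub ((contDiff_truncExp χ).continuous_deriv le_rfl)
  exact ((hcont.comp_continuousOn hu).sub (hcont.comp_continuousOn hv)).abs.aestronglyMeasurable
    hΩ.measurableSet

theorem IsTranslatorOn.aestronglyMeasurable_mul_normalGap (χ : ContDiffBump (0 : ℝ))
    (hΩ : IsOpen Ω) (hu : IsTranslatorOn Ω u) (hv : IsTranslatorOn Ω v) (hζ : Continuous ζ) :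
    AEStronglyMeasurable (fun p => ζ p * (deriv (truncExp χ) (u p) * normalGap u v p))
      (volume.restrict Ω) := by
  have hgap : ContinuousOn (normalGap u v) Ω := fun p hp =>
    (continuousAt_normalGap ((hu.contDiffAt hΩ hp).of_le (by norm_cast))
      ((hv.contDiffAt hΩ hp).of_le (by norm_cast))).continuousWithinAt
  exact (hζ.continuousOn.mul ((((contDiff_truncExp χ).continuous_deriv le_rfl).comp_continuousOn
    hu.1.continuousOn).mul hgap)).aestronglyMeasurable hΩ.measurableSet

/-- The flux field vanishes near `∂Ω \ F` because `truncExp χ` is constant near `±∞`, and near `F`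
because of the cutoff, so no boundary term appears. -/
theorem IsTranslatorOn.setIntegral_divergence_smul_fluxField_eq_zero (hΩ : IsOpen Ω)
    (hb : Bornology.IsBounded Ω) (hu : IsTranslatorOn Ω u) (hv : IsTranslatorOn Ω v)
    (huv : SameInfiniteBoundary Ω F u v) (χ : ContDiffBump (0 : ℝ)) (hζ : IsCutoff volume F ε ζ) :
    IntegrableOn (divergence fun q => ζ q • fluxField (truncExp χ) u v q) Ω ∧
      ∫ p in Ω, divergence (fun q => ζ q • fluxField (truncExp χ) u v q) p = 0 := by
  refine integrableOn_divergence_and_setIntegral_eq_zero hΩ hb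
    (fun p hp => (hζ.contDiff.contDiffAt.smul (contDiffAt_fluxField (contDiff_truncExp χ)
      ((hu.contDiffAt hΩ hp).of_le (by norm_cast))
      ((hv.contDiffAt hΩ hp).of_le (by norm_cast)))).contDiffWithinAt)
    fun q hq => ?_
  by_cases hqF : q ∈ F
  · filter_upwards [nhdsWithin_le_nhds (hζ.eventually_eq_zero q hqF)] with p hp
    rw [hp, zero_smul]
  · filter_upwards [eventually_fluxField_truncExp_eq_zero χ (huv q ⟨hq, hqF⟩)] with p hp
    rw [hp, smul_zero]

theorem IsTranslatorOn.setIntegral_mul_normalGap_le (hΩ : IsOpen Ω) (hb : Bornology.IsBounded Ω)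
    (hu : IsTranslatorOn Ω u) (hv : IsTranslatorOn Ω v) (huv : SameInfiniteBoundary Ω F u v)
    (χ : ContDiffBump (0 : ℝ)) (hζ : IsCutoff volume F ε ζ)
    (hD : IntegrableOn (expDefect (truncExp χ) u v) Ω) :
    ∫ p in Ω, ζ p * (deriv (truncExp χ) (u p) * normalGap u v p) ≤
      (∫ p in Ω, expDefect (truncExp χ) u v p) + 2 * (1 + rexp χ.rOut) * ε := by
  obtain ⟨hdiv, hdiv0⟩ := hu.setIntegral_divergence_smul_fluxField_eq_zero hΩ hb hv huv χ hζ
  have hgrad : IntegrableOn (fun p => 2 * (1 + rexp χ.rOut) * ‖fderiv ℝ ζ p‖) Ω :=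
    (hζ.integrable_norm_fderiv.const_mul _).integrableOn
  have hgrad_le : ∫ p in Ω, ‖fderiv ℝ ζ p‖ ≤ ε :=
    (setIntegral_le_integral hζ.integrable_norm_fderiv
      (.of_forall fun _ => norm_nonneg _)).trans hζ.integral_norm_fderiv_le
  calc ∫ p in Ω, ζ p * (deriv (truncExp χ) (u p) * normalGap u v p)
      ≤ ∫ p in Ω, (expDefect (truncExp χ) u v p + 2 * (1 + rexp χ.rOut) * ‖fderiv ℝ ζ p‖
          + divergence (fun q => ζ q • fluxField (truncExp χ) u v q) p) := by
        refine integral_mono_of_nonneg (.of_forall fun p => mul_nonneg (hζ.mem_Icc p).1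
          (deriv_truncExp_mul_normalGap_mem_Icc χ u v p).1) ((hD.add hgrad).add hdiv)
          (ae_restrict_of_forall_mem hΩ.measurableSet fun p hp => ?_)
        have h := le_divergence_smul_fluxField hΩ hu hv (contDiff_truncExp χ)
          (deriv_truncExp_nonneg χ)
          (fun t => ⟨truncExp_nonneg χ t, truncExp_le_one_add_exp_rOut χ t⟩)
          (hζ.contDiff.differentiable one_ne_zero p) (hζ.mem_Icc p) hp
        linarith
    _ = (∫ p in Ω, expDefect (truncExp χ) u v p)
          + 2 * (1 + rexp χ.rOut) * ∫ p in Ω, ‖fderiv ℝ ζ p‖ := by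
        rw [integral_add (f := fun p => expDefect (truncExp χ) u v p + _) (hD.add hgrad) hdiv,
          hdiv0, add_zero, integral_add hD hgrad, integral_const_mul]
    _ ≤ _ := by gcongr

theorem tendsto_setIntegral_expDefect_truncExp {χ : ℕ → ContDiffBump (0 : ℝ)} (hΩ : IsOpen Ω)
    (hb : Bornology.IsBounded Ω) (hχ : Tendsto (fun n => (χ n).rIn) atTop atTop)
    (hu : ContinuousOn u Ω) (hv : ContinuousOn v Ω) (hexpu : IntegrableOn (fun p => rexp (u p)) Ω)
    (hexpv : IntegrableOn (fun p => rexp (v p)) Ω) :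
    (∀ n, IntegrableOn (expDefect (truncExp (χ n)) u v) Ω) ∧
      Tendsto (fun n => ∫ p in Ω, expDefect (truncExp (χ n)) u v p) atTop (𝓝 0) := by
  have hone : IntegrableOn (fun _ => (1 : ℝ)) Ω := integrableOn_const hb.measure_lt_top.ne
  have hbound : IntegrableOn (fun p => (1 + rexp (u p)) + (1 + rexp (v p))) Ω :=
    (hone.add hexpu).add (hone.add hexpv)
  have hle (n : ℕ) : ∀ᵐ p ∂volume.restrict Ω,
      ‖expDefect (truncExp (χ n)) u v p‖ ≤ (1 + rexp (u p)) + (1 + rexp (v p)) :=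
    .of_forall fun p => (Real.norm_of_nonneg (abs_nonneg _)).trans_le
      (expDefect_truncExp_le (χ n) u v p)
  have hmeas (n : ℕ) :=
    aestronglyMeasurable_expDefect_truncExp (χ n) hΩ hu hv
  refine ⟨fun n => hbound.mono' (hmeas n) (hle n), ?_⟩
  rw [← integral_zero (ℝ × ℝ) ℝ (μ := volume.restrict Ω)]
  refine tendsto_integral_of_dominated_convergence _ hmeas hbound hle
    (.of_forall fun p => tendsto_const_nhds.congr' ?_)
  filter_upwards [hχ.eventually_ge_atTop |u p|, hχ.eventually_ge_atTop |v p|] with n hun hvn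
  exact (expDefect_truncExp_eq_zero hun hvn).symm

theorem IsTranslatorOn.tendsto_setIntegral_mul_normalGap {χ : ℕ → ContDiffBump (0 : ℝ)}
    {η : ℕ → ℝ} {ζ : ℕ → ℝ × ℝ → ℝ} (hΩ : IsOpen Ω) (hu : IsTranslatorOn Ω u)
    (hv : IsTranslatorOn Ω v) (hF : F.Finite) (hexp : IntegrableOn (fun p => rexp (u p)) Ω)
    (hχ : Tendsto (fun n => (χ n).rIn) atTop atTop) (hη : Tendsto η atTop (𝓝 0))
    (hζ : ∀ n, IsCutoff volume F (η n) (ζ n)) :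
    Tendsto (fun n => ∫ p in Ω, ζ n p * (deriv (truncExp (χ n)) (u p) * normalGap u v p)) atTop
      (𝓝 (∫ p in Ω, rexp (u p) * normalGap u v p)) := by
  refine tendsto_integral_of_dominated_convergence (fun p => 2 * rexp (u p))
    (fun n => hu.aestronglyMeasurable_mul_normalGap (χ n) hΩ hv (hζ n).contDiff.continuous)
    (hexp.const_mul 2) (fun n => .of_forall fun p => ?_) ?_
  · have hgap := deriv_truncExp_mul_normalGap_mem_Icc (χ n) u v p
    rw [Real.norm_of_nonneg (mul_nonneg ((hζ n).mem_Icc p).1 hgap.1)]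
    exact (mul_le_of_le_one_left hgap.1 ((hζ n).mem_Icc p).2).trans hgap.2
  · have hae : ∀ᵐ p ∂volume.restrict Ω, p ∉ F :=
      ae_restrict_of_ae (measure_eq_zero_iff_ae_notMem.1 (hF.measure_zero volume))
    filter_upwards [hae] with p hp
    refine tendsto_const_nhds.congr' ?_
    filter_upwards [IsCutoff.eventually_eq_one hζ hη hF.isClosed hp,
      hχ.eventually_ge_atTop |u p|] with n hζn hun
    rw [hζn, one_mul, deriv_truncExp,
      (χ n).one_of_mem_closedBall (mem_closedBall_zero_iff.2 hun), mul_one]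

theorem IsTranslatorOn.setIntegral_exp_mul_normalGap_le_zero (hΩ : IsOpen Ω)
    (hb : Bornology.IsBounded Ω) (hu : IsTranslatorOn Ω u) (hv : IsTranslatorOn Ω v)
    (hF : F.Finite) (huv : SameInfiniteBoundary Ω F u v)
    (hexpu : IntegrableOn (fun p => rexp (u p)) Ω)
    (hexpv : IntegrableOn (fun p => rexp (v p)) Ω) :
    ∫ p in Ω, rexp (u p) * normalGap u v p ≤ 0 := by
  let χ (n : ℕ) : ContDiffBump (0 : ℝ) := ⟨n + 1, n + 2, by positivity, by linarith⟩
  -- `2 (1 + exp (n + 2))` bounds the flux field, so the cutoff at `F` costs at most `1 / (n + 1)`.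
  let η (n : ℕ) : ℝ := 1 / (n + 1) / (2 * (1 + rexp (χ n).rOut))
  have hη (n : ℕ) : η n ∈ Ioc 0 (1 / ((n : ℝ) + 1)) :=
    ⟨by positivity, div_le_self (by positivity) (by linarith [exp_pos (χ n).rOut])⟩
  have hχ : Tendsto (fun n => (χ n).rIn) atTop atTop :=
    tendsto_atTop_add_const_right _ 1 tendsto_natCast_atTop_atTop
  have hdim : 2 ≤ Module.finrank ℝ (ℝ × ℝ) := by simp
  choose ζ hζ using fun n => exists_isCutoff_of_finite (μ := volume) hdim hF (hη n).1
  have hη0 : Tendsto η atTop (𝓝 0) := squeeze_zero (fun n => (hη n).1.le) (fun n => (hη n).2)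
    tendsto_one_div_add_atTop_nhds_zero_nat
  obtain ⟨hD, hD0⟩ := tendsto_setIntegral_expDefect_truncExp hΩ hb hχ hu.1.continuousOn
    hv.1.continuousOn hexpu hexpv
  refine le_of_tendsto_of_tendsto'
    (hu.tendsto_setIntegral_mul_normalGap hΩ hv hF hexpu hχ hη0 hζ)
    (by simpa using hD0.add (tendsto_one_div_add_atTop_nhds_zero_nat (𝕜 := ℝ))) fun n => ?_
  refine (hu.setIntegral_mul_normalGap_le hΩ hb hv huv (χ n) (hζ n) (hD n)).trans_eq ?_
  rw [mul_div_cancel₀ _ (by positivity), one_div]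

theorem IsTranslatorOn.fderiv_eq_of_setIntegral_le_zero (hΩ : IsOpen Ω) (hu : IsTranslatorOn Ω u)
    (hv : IsTranslatorOn Ω v) (hexp : IntegrableOn (fun p => rexp (u p)) Ω)
    (h : ∫ p in Ω, rexp (u p) * normalGap u v p ≤ 0) : EqOn (fderiv ℝ u) (fderiv ℝ v) Ω := by
  have hcont : ContinuousOn (fun p => rexp (u p) * normalGap u v p) Ω := fun p hp =>
    (((hu.contDiffAt hΩ hp).continuousAt.rexp).mul
      (continuousAt_normalGap ((hu.contDiffAt hΩ hp).of_le (by norm_cast))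
        ((hv.contDiffAt hΩ hp).of_le (by norm_cast)))).continuousWithinAt
  have hnn (p : ℝ × ℝ) : 0 ≤ rexp (u p) * normalGap u v p :=
    mul_nonneg (exp_pos _).le (normalGap_nonneg u v p)
  have hint : IntegrableOn (fun p => rexp (u p) * normalGap u v p) Ω := by
    refine (hexp.mul_const 2).mono' (hcont.aestronglyMeasurable hΩ.measurableSet)
      (.of_forall fun p => ?_)
    rw [Real.norm_of_nonneg (hnn p)]
    exact mul_le_mul_of_nonneg_left (normalGap_le_two u v p) (exp_pos _).le
  have hzero : EqOn (fun p => rexp (u p) * normalGap u v p) 0 Ω :=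
    Measure.eqOn_open_of_ae_eq ((integral_eq_zero_iff_of_nonneg hnn hint).1
      (h.antisymm (integral_nonneg hnn))) hΩ hcont continuousOn_const
  exact fun p hp => fderiv_eq_of_normalGap_eq_zero
    ((mul_eq_zero.1 (hzero hp)).resolve_left (exp_pos _).ne')

theorem IsTranslatorOn.exists_sub_eq_const (hu : IsTranslatorOn Ω u) (hv : IsTranslatorOn Ω v)
    (hΩ : IsOpen Ω) (hb : Bornology.IsBounded Ω) (hconn : IsPreconnected Ω) (hF : F.Finite)
    (huv : SameInfiniteBoundary Ω F u v) (hexpu : IntegrableOn (fun p => rexp (u p)) Ω)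
    (hexpv : IntegrableOn (fun p => rexp (v p)) Ω) :
    ∃ c, ∀ p ∈ Ω, u p - v p = c := by
  obtain ⟨c, hc⟩ := hΩ.exists_eq_add_of_fderiv_eq hconn
    (fun p hp => (hu.differentiableAt hΩ hp).differentiableWithinAt)
    (fun p hp => (hv.differentiableAt hΩ hp).differentiableWithinAt)
    (hu.fderiv_eq_of_setIntegral_le_zero hΩ hv hexpu
      (hu.setIntegral_exp_mul_normalGap_le_zero hΩ hb hv hF huv hexpu hexpv))
  exact ⟨c, fun p hp => by rw [hc hp, add_sub_cancel_left]⟩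

end Uniqueness

section SecondDerivativeTest

variable {E : Type*} [NormedAddCommGroup E] [NormedSpace ℝ E] {f g : E → ℝ} {p : E}

theorem hessian_sub (hf : ContDiffAt ℝ 2 f p) (hg : ContDiffAt ℝ 2 g p) (e e' : E) :
    hessian (fun q => f q - g q) p e e' = hessian f p e e' - hessian g p e e' := by
  have hd {h : E → ℝ} (hh : ContDiffAt ℝ 2 h p) : DifferentiableAt ℝ (fderiv ℝ h) p :=
    (hh.fderiv_right (m := 1) le_rfl).differentiableAt one_ne_zero
  have heq : fderiv ℝ (fun q => f q - g q) =ᶠ[𝓝 p] fun q => fderiv ℝ f q - fderiv ℝ g q := by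
    filter_upwards [hf.eventually (by simp), hg.eventually (by simp)] with q hfq hgq
    exact fderiv_fun_sub (hfq.differentiableAt two_ne_zero) (hgq.differentiableAt two_ne_zero)
  rw [hessian, heq.fderiv_eq, fderiv_fun_sub (hd hf) (hd hg)]
  rfl

theorem deriv_deriv_nonpos_of_isLocalMax {h : ℝ → ℝ} {t : ℝ} (hc : ContinuousAt h t)
    (hmax : IsLocalMax h t) : deriv (deriv h) t ≤ 0 := by
  by_contra! hpos
  have hmin : IsLocalMin h t := isLocalMin_of_deriv_deriv_pos hpos hmax.deriv_eq_zero hc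
  have hconst : h =ᶠ[𝓝 t] fun _ => h t := by
    filter_upwards [hmax, hmin] with r hle hge
    exact le_antisymm hle hge
  rw [hconst.deriv.deriv_eq] at hpos
  simp at hpos

theorem deriv_deriv_comp_add_smul (hf : ContDiffAt ℝ 2 f p) (e : E) :
    deriv (deriv fun t : ℝ => f (p + t • e)) 0 = hessian f p e e := by
  have hline (t : ℝ) : HasDerivAt (fun t : ℝ => p + t • e) e t := by
    simpa using ((hasDerivAt_id t).smul_const e).const_add p
  have hline0 : p + (0 : ℝ) • e = p := by simp
  have htend : Tendsto (fun t : ℝ => p + t • e) (𝓝 0) (𝓝 p) := by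
    simpa only [hline0] using (hline 0).continuousAt.tendsto
  have hderiv : deriv (fun t : ℝ => f (p + t • e)) =ᶠ[𝓝 0] fun t => fderiv ℝ f (p + t • e) e := by
    filter_upwards [htend.eventually (hf.eventually (by simp))] with t ht
    exact ((ht.differentiableAt two_ne_zero).hasFDerivAt.comp_hasDerivAt t (hline t)).deriv
  have hd : DifferentiableAt ℝ (fun q => fderiv ℝ f q e) (p + (0 : ℝ) • e) := by
    rw [hline0]
    exact ((hf.fderiv_right (m := 1) le_rfl).clm_apply contDiffAt_const).differentiableAt
      one_ne_zero
  rw [hderiv.deriv_eq, ← fderiv_fderiv_apply hf]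
  simpa only [hline0, Function.comp_def] using (hd.hasFDerivAt.comp_hasDerivAt 0 (hline 0)).deriv

theorem hessian_apply_self_nonpos_of_isLocalMax (hf : ContDiffAt ℝ 2 f p) (hmax : IsLocalMax f p)
    (e : E) : hessian f p e e ≤ 0 := by
  have hline : ContinuousAt (fun t : ℝ => p + t • e) 0 := by fun_prop
  have hline0 : p + (0 : ℝ) • e = p := by simp
  rw [← deriv_deriv_comp_add_smul hf]
  refine deriv_deriv_nonpos_of_isLocalMax
    (ContinuousAt.comp (by simpa only [hline0] using hf.continuousAt) hline) ?_
  exact IsLocalMax.comp_continuous (g := fun t : ℝ => p + t • e) (by rwa [hline0]) hline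

theorem fderiv_comp_clm {h : ℝ → ℝ} (ℓ : E →L[ℝ] ℝ) (hh : DifferentiableAt ℝ h (ℓ p)) :
    fderiv ℝ (fun q => h (ℓ q)) p = deriv h (ℓ p) • ℓ :=
  (hh.hasDerivAt.comp_hasFDerivAt p ℓ.hasFDerivAt).fderiv

theorem hessian_comp_clm {h : ℝ → ℝ} (ℓ : E →L[ℝ] ℝ) (hh : ContDiffAt ℝ 2 h (ℓ p)) (e e' : E) :
    hessian (fun q => h (ℓ q)) p e e' = deriv (deriv h) (ℓ p) * (ℓ e * ℓ e') := by
  have heq : fderiv ℝ (fun q => h (ℓ q)) =ᶠ[𝓝 p] fun q => deriv h (ℓ q) • ℓ := by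
    filter_upwards [ℓ.continuous.continuousAt.eventually (hh.eventually (by simp))] with q hq
    exact fderiv_comp_clm ℓ (hq.differentiableAt two_ne_zero)
  have hd : DifferentiableAt ℝ (deriv h) (ℓ p) :=
    ((hh.fderiv_right (m := 1) le_rfl).clm_apply contDiffAt_const).differentiableAt one_ne_zero
  have hfderiv : HasFDerivAt (fun q => deriv h (ℓ q) • ℓ) _ p :=
    (hd.hasDerivAt.comp_hasFDerivAt p ℓ.hasFDerivAt).smul_const ℓ
  rw [hessian, heq.fderiv_eq, hfderiv.fderiv]
  simp only [ContinuousLinearMap.smulRight_apply, smul_apply, smul_eq_mul]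
  ring

end SecondDerivativeTest

section Touching

variable {u φ : ℝ × ℝ → ℝ} {p : ℝ × ℝ}

theorem minimalSurfaceOp_eq_hessian (h : ContDiffAt ℝ 2 u p) :
    minimalSurfaceOp u p = hessian u p (1, 0) (1, 0) + hessian u p (0, 1) (0, 1)
      + hessian u p (-pdy u p, pdx u p) (-pdy u p, pdx u p) := by
  have hn : (-pdy u p, pdx u p) =
      (-pdy u p) • ((1 : ℝ), (0 : ℝ)) + pdx u p • ((0 : ℝ), (1 : ℝ)) := by simp
  rw [hn]
  simp only [map_add, map_smul, add_apply, smul_apply, smul_eq_mul]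
  rw [hessian_comm h (1, 0) (0, 1), minimalSurfaceOp, pdx_pdx_eq_hessian h, pdy_pdx_eq_hessian h,
    pdy_pdy_eq_hessian h]
  ring

theorem fderiv_eq_of_isLocalMax_sub (hu : DifferentiableAt ℝ u p) (hφ : DifferentiableAt ℝ φ p)
    (hmax : IsLocalMax (fun q => u q - φ q) p) : fderiv ℝ u p = fderiv ℝ φ p := by
  rw [← sub_eq_zero, ← fderiv_fun_sub hu hφ, hmax.fderiv_eq_zero]

theorem minimalSurfaceOp_le_of_isLocalMax_sub (hu : ContDiffAt ℝ 2 u p) (hφ : ContDiffAt ℝ 2 φ p)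
    (hmax : IsLocalMax (fun q => u q - φ q) p) : minimalSurfaceOp u p ≤ minimalSurfaceOp φ p := by
  have hgrad : fderiv ℝ u p = fderiv ℝ φ p := fderiv_eq_of_isLocalMax_sub
    (hu.differentiableAt two_ne_zero) (hφ.differentiableAt two_ne_zero) hmax
  have hle (e : ℝ × ℝ) : hessian u p e e ≤ hessian φ p e e := by
    rw [← sub_nonpos, ← hessian_sub hu hφ]
    exact hessian_apply_self_nonpos_of_isLocalMax (hu.sub hφ) hmax e
  rw [minimalSurfaceOp_eq_hessian hu, minimalSurfaceOp_eq_hessian hφ, pdx, pdy, hgrad]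
  exact add_le_add_three (hle _) (hle _) (hle _)

theorem IsTranslatorOn.not_isLocalMax_sub {Ω : Set (ℝ × ℝ)} (hu : IsTranslatorOn Ω u)
    (hΩ : IsOpen Ω) (hp : p ∈ Ω) (hφ : ContDiffAt ℝ 2 φ p)
    (hsuper : minimalSurfaceOp φ p < areaElement φ p ^ 2) :
    ¬ IsLocalMax (fun q => u q - φ q) p := fun hmax => by
  have hu2 : ContDiffAt ℝ 2 u p := (hu.contDiffAt hΩ hp).of_le (by norm_cast)
  have hgrad := fderiv_eq_of_isLocalMax_sub (hu2.differentiableAt two_ne_zero)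
    (hφ.differentiableAt two_ne_zero) hmax
  have hle := minimalSurfaceOp_le_of_isLocalMax_sub hu2 hφ hmax
  rw [hu.minimalSurfaceOp_eq hp, areaElement_congr hgrad] at hle
  exact hsuper.not_ge hle

end Touching

section MaximumPrinciple

theorem le_of_eventually_le_of_forall_not_isLocalMax {X : Type*} [TopologicalSpace X] {U : Set X}
    (hU : IsOpen U) (hc : IsCompact (closure U)) {f : X → ℝ} {M : ℝ} (hf : ContinuousOn f U)
    (hM : ∀ x ∈ frontier U, ∀ᶠ y in 𝓝[U] x, f y ≤ M) (hmax : ∀ x ∈ U, ¬ IsLocalMax f x) {x : X}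
    (hx : x ∈ U) : f x ≤ M := by
  by_contra! hlt
  have hclosed : IsClosed (U ∩ f ⁻¹' Ici (f x)) := by
    refine isClosed_of_closure_subset fun y hy => ?_
    have hyU : y ∈ U := by
      by_contra hyU
      have hyfr : y ∈ frontier U := hU.frontier_eq ▸ ⟨closure_mono inter_subset_left hy, hyU⟩
      obtain ⟨z, ⟨hzU, hxz⟩, hz⟩ := ((mem_closure_iff_frequently.1 hy).and_eventually
        (eventually_nhdsWithin_iff.1 (hM y hyfr))).exists
      exact (hlt.trans_le hxz).not_ge (hz hzU)
    refine ⟨hyU, ?_⟩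
    have hfy := (hf.continuousAt (hU.mem_nhds hyU)).continuousWithinAt.mem_closure hy
      (t := Ici (f x)) fun z hz => hz.2
    rwa [closure_Ici] at hfy
  obtain ⟨z, ⟨hzU, hxz⟩, hz⟩ := (hc.of_isClosed_subset hclosed
    (inter_subset_left.trans subset_closure)).exists_isMaxOn ⟨x, hx, mem_preimage.2 self_mem_Ici⟩
      (hf.mono inter_subset_left)
  refine hmax z hzU ?_
  filter_upwards [hU.mem_nhds hzU] with y hyU
  rcases le_total (f x) (f y) with h | h
  · exact hz ⟨hyU, h⟩
  · exact h.trans hxz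

theorem IsTranslatorOn.sub_le_of_eventually_le {U : Set (ℝ × ℝ)} {u φ : ℝ × ℝ → ℝ} {M : ℝ}
    (hu : IsTranslatorOn U u) (hU : IsOpen U) (hb : Bornology.IsBounded U)
    (hφ : ∀ p ∈ U, ContDiffAt ℝ 2 φ p)
    (hsuper : ∀ p ∈ U, minimalSurfaceOp φ p < areaElement φ p ^ 2)
    (hM : ∀ q ∈ frontier U, ∀ᶠ p in 𝓝[U] q, u p - φ p ≤ M) {p : ℝ × ℝ} (hp : p ∈ U) :
    u p - φ p ≤ M :=
  le_of_eventually_le_of_forall_not_isLocalMax hU hb.isCompact_closure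
    (fun q hq => ((hu.contDiffAt hU hq).continuousAt.sub (hφ q hq).continuousAt).continuousWithinAt)
    hM (fun q hq => hu.not_isLocalMax_sub hU hq (hφ q hq) (hsuper q hq)) hp

end MaximumPrinciple

section LogBarrier

variable {a b c A q : ℝ} {p : ℝ × ℝ}

/-- The linear form `(x, y) ↦ a x + b y`; for `a² + b² = 1` the pair
`(planeForm a b, planeForm (-b) a)` is a rotation of the coordinates. -/
def planeForm (a b : ℝ) : ℝ × ℝ →L[ℝ] ℝ :=
  a • ContinuousLinearMap.fst ℝ ℝ ℝ + b • ContinuousLinearMap.snd ℝ ℝ ℝ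

theorem planeForm_apply (a b : ℝ) (p : ℝ × ℝ) : planeForm a b p = a * p.1 + b * p.2 := rfl

section Separable

variable {f g : ℝ → ℝ}

theorem fderiv_sub_comp_planeForm (hf : DifferentiableAt ℝ f (planeForm a b p))
    (hg : DifferentiableAt ℝ g (planeForm (-b) a p)) (e : ℝ × ℝ) :
    fderiv ℝ (fun p => f (planeForm a b p) - g (planeForm (-b) a p)) p e
      = deriv f (planeForm a b p) * planeForm a b e
        - deriv g (planeForm (-b) a p) * planeForm (-b) a e := by
  rw [fderiv_fun_sub (by fun_prop) (by fun_prop), fderiv_comp_clm _ hf, fderiv_comp_clm _ hg]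
  rfl

theorem areaElement_sq_sub_comp_planeForm (hab : a ^ 2 + b ^ 2 = 1)
    (hf : DifferentiableAt ℝ f (planeForm a b p))
    (hg : DifferentiableAt ℝ g (planeForm (-b) a p)) :
    areaElement (fun p => f (planeForm a b p) - g (planeForm (-b) a p)) p ^ 2
      = 1 + deriv f (planeForm a b p) ^ 2 + deriv g (planeForm (-b) a p) ^ 2 := by
  rw [areaElement_sq, pdx, pdy, fderiv_sub_comp_planeForm hf hg, fderiv_sub_comp_planeForm hf hg]
  generalize deriv f _ = f', deriv g _ = g'
  simp only [planeForm_apply]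
  linear_combination (f' ^ 2 + g' ^ 2) * hab

theorem minimalSurfaceOp_sub_comp_planeForm (hab : a ^ 2 + b ^ 2 = 1)
    (hf : ContDiffAt ℝ 2 f (planeForm a b p)) (hg : ContDiffAt ℝ 2 g (planeForm (-b) a p)) :
    minimalSurfaceOp (fun p => f (planeForm a b p) - g (planeForm (-b) a p)) p
      = deriv (deriv f) (planeForm a b p) * (1 + deriv g (planeForm (-b) a p) ^ 2)
        - deriv (deriv g) (planeForm (-b) a p) * (1 + deriv f (planeForm a b p) ^ 2) := by
  have hf' := hf.differentiableAt two_ne_zero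
  have hg' := hg.differentiableAt two_ne_zero
  have hfℓ : ContDiffAt ℝ 2 (fun p => f (planeForm a b p)) p :=
    hf.comp p (planeForm a b).contDiff.contDiffAt
  have hgℓ : ContDiffAt ℝ 2 (fun p => g (planeForm (-b) a p)) p :=
    hg.comp p (planeForm (-b) a).contDiff.contDiffAt
  rw [minimalSurfaceOp_eq_hessian (hfℓ.sub hgℓ)]
  simp only [hessian_sub hfℓ hgℓ, hessian_comp_clm _ hf, hessian_comp_clm _ hg, pdx, pdy,
    fderiv_sub_comp_planeForm hf' hg']
  generalize deriv (deriv f) _ = f'', deriv (deriv g) _ = g'', deriv f _ = f', deriv g _ = g'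
  simp only [planeForm_apply]
  linear_combination (f'' - g'' + (f'' * g' ^ 2 - g'' * f' ^ 2) * (a ^ 2 + b ^ 2 + 1)) * hab

end Separable

/-- The barrier `-q log (d - c) - A s² / 2` in the rotated coordinates `d = a x + b y`,
`s = -b x + a y`; it is used only on the half plane `c < d`. -/
def logBarrier (a b c A q : ℝ) (p : ℝ × ℝ) : ℝ :=
  -q * Real.log (planeForm a b p - c) - A / 2 * planeForm (-b) a p ^ 2

theorem contDiffAt_logBarrier {n : WithTop ℕ∞} (hp : c < planeForm a b p) :
    ContDiffAt ℝ n (logBarrier a b c A q) p := by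
  have hd : planeForm a b p - c ≠ 0 := (sub_pos.2 hp).ne'
  unfold logBarrier
  fun_prop (disch := assumption)

theorem minimalSurfaceOp_logBarrier_lt (hab : a ^ 2 + b ^ 2 = 1) (hA : 0 < A)
    (hqA : q * (1 + A) = 1 + A / 2) (hs : A * planeForm (-b) a p ^ 2 ≤ 1 / 2)
    (hp : c < planeForm a b p) :
    minimalSurfaceOp (logBarrier a b c A q) p < areaElement (logBarrier a b c A q) p ^ 2 := by
  have hd : 0 < planeForm a b p - c := sub_pos.2 hp
  have hd0 := hd.ne'
  have hf1 : deriv (fun t => -q * Real.log (t - c)) = fun t => -q * (t - c)⁻¹ := by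
    ext t
    rw [deriv_const_mul_field, deriv_comp_sub_const (f := Real.log), Real.deriv_log]
  have hf2 (t : ℝ) : deriv (fun t => -q * (t - c)⁻¹) t = q * ((t - c) ^ 2)⁻¹ := by
    rw [deriv_const_mul_field, deriv_comp_sub_const (f := fun t => t⁻¹), deriv_inv, neg_mul_neg]
  have hg1 : deriv (fun t : ℝ => A / 2 * t ^ 2) = fun t => A * t := by
    ext t
    simp
    ring
  have hg2 (t : ℝ) : deriv (fun t : ℝ => A * t) t = A := by simp
  have hf : ContDiffAt ℝ 2 (fun t => -q * Real.log (t - c)) (planeForm a b p) := by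
    fun_prop (disch := assumption)
  have hg : ContDiffAt ℝ 2 (fun t : ℝ => A / 2 * t ^ 2) (planeForm (-b) a p) := by fun_prop
  unfold logBarrier
  rw [minimalSurfaceOp_sub_comp_planeForm hab hf hg, areaElement_sq_sub_comp_planeForm hab
    (hf.differentiableAt two_ne_zero) (hg.differentiableAt two_ne_zero), hf1, hf2, hg1, hg2]
  beta_reduce
  generalize planeForm (-b) a p = s at hs ⊢
  generalize planeForm a b p - c = d at hd hd0 ⊢
  have hq : 0 < q := by nlinarith
  have hAs : (A * s) ^ 2 ≤ A / 2 := by nlinarith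
  have key : q * (d ^ 2)⁻¹ * (1 + (A * s) ^ 2) ≤ q * (d ^ 2)⁻¹ * (q * (1 + A)) := by
    gcongr
    linarith
  have hsq : (-q * d⁻¹) ^ 2 = q * (d ^ 2)⁻¹ * q := by
    field_simp
  rw [hsq]
  linarith [sq_nonneg (A * s)]

end LogBarrier

section BoundaryGrowth

variable {Ω : Set (ℝ × ℝ)} {u : ℝ × ℝ → ℝ} {a b c d₀ ε A q B : ℝ}

theorem exists_forall_eventually_le_of_isCompact {X : Type*} [TopologicalSpace X] {K s : Set X}
    {f : X → ℝ} (hK : IsCompact K) (hf : ∀ x ∈ K, ∃ B, ∀ᶠ y in 𝓝[s] x, f y ≤ B) :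
    ∃ B, ∀ x ∈ K, ∀ᶠ y in 𝓝[s] x, f y ≤ B := by
  refine hK.induction_on (p := fun t => ∃ B, ∀ x ∈ t, ∀ᶠ y in 𝓝[s] x, f y ≤ B) ⟨0, by simp⟩
    (fun t t' htt' ⟨B, hB⟩ => ⟨B, fun x hx => hB x (htt' hx)⟩) ?_ fun x hx => ?_
  · rintro t t' ⟨B, hB⟩ ⟨B', hB'⟩
    refine ⟨max B B', fun x hx => ?_⟩
    rcases hx with hx | hx
    · exact (hB x hx).mono fun y hy => hy.trans (le_max_left _ _)
    · exact (hB' x hx).mono fun y hy => hy.trans (le_max_right _ _)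
  · obtain ⟨B, hB⟩ := hf x hx
    exact ⟨_, mem_nhdsWithin_of_mem_nhds (eventually_nhds_nhdsWithin.2 hB), B, fun y hy => hy⟩

theorem exists_mul_sq_le_half (ℓ : ℝ × ℝ →L[ℝ] ℝ) (hb : Bornology.IsBounded Ω) :
    ∃ A > 0, ∀ p ∈ Ω, A * ℓ p ^ 2 ≤ 1 / 2 := by
  obtain ⟨S, hS⟩ := hb.isCompact_closure.bddAbove_image (f := fun p => ℓ p ^ 2) (by fun_prop)
  have hS' (p) (hp : p ∈ Ω) : ℓ p ^ 2 ≤ max S 1 :=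
    (hS (mem_image_of_mem _ (subset_closure hp))).trans (le_max_left _ _)
  refine ⟨1 / (2 * max S 1), by positivity, fun p hp => ?_⟩
  rw [div_mul_eq_mul_div, div_le_div_iff₀ (by positivity) two_pos]
  linarith [hS' p hp]

theorem neg_mul_log_sub_le_logBarrier {p : ℝ × ℝ} (hq : 0 ≤ q)
    (hs : A * planeForm (-b) a p ^ 2 ≤ 1 / 2) (hd : planeForm a b p - c ∈ Ioc 0 d₀) :
    -q * Real.log d₀ - 1 / 4 ≤ logBarrier a b c A q p := by
  have hlog := mul_le_mul_of_nonneg_left (Real.log_le_log hd.1 hd.2) hq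
  unfold logBarrier
  linarith

theorem tendsto_logBarrier_atTop {x : ℝ × ℝ} (hq : 0 < q) (hx : planeForm a b x = c) :
    Tendsto (logBarrier a b c A q) (𝓝[{p | c < planeForm a b p}] x) atTop := by
  have hd : Tendsto (fun p => planeForm a b p - c) (𝓝[{p | c < planeForm a b p}] x) (𝓝[>] 0) := by
    refine tendsto_nhdsWithin_iff.2 ⟨?_, ?_⟩
    · have hcont : Continuous fun p => planeForm a b p - c := by fun_prop
      simpa only [hx, sub_self] using (hcont.tendsto x).mono_left nhdsWithin_le_nhds
    · filter_upwards [self_mem_nhdsWithin] with p hp using sub_pos.2 hp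
  have hs : Tendsto (fun p => -(A / 2 * planeForm (-b) a p ^ 2))
      (𝓝[{p | c < planeForm a b p}] x) (𝓝 (-(A / 2 * planeForm (-b) a x ^ 2))) :=
    (Continuous.tendsto (by fun_prop) x).mono_left nhdsWithin_le_nhds
  exact ((Real.tendsto_log_nhdsGT_zero.comp hd).const_mul_atBot_of_neg
    (neg_neg_of_pos hq)).atTop_add hs

theorem IsTranslatorOn.sub_logBarrier_le (hu : IsTranslatorOn Ω u) (hΩ : IsOpen Ω)
    (hb : Bornology.IsBounded Ω) (hab : a ^ 2 + b ^ 2 = 1) (hA : 0 < A) (hq : 0 < q)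
    (hqA : q * (1 + A) = 1 + A / 2) (hs : ∀ p ∈ Ω, A * planeForm (-b) a p ^ 2 ≤ 1 / 2)
    (hε : 0 < ε)
    (hbd : ∀ x ∈ frontier Ω, planeForm a b x - c ∈ Ioc 0 d₀ → Tendsto u (𝓝[Ω] x) atBot)
    (hB : ∀ x ∈ closure Ω, planeForm a b x = c + d₀ → ∀ᶠ p in 𝓝[Ω] x, u p ≤ B)
    {p : ℝ × ℝ} (hp : p ∈ Ω) (hpd : planeForm a b p - c ∈ Ioo ε d₀) :
    u p - logBarrier a b (c + ε) A q p ≤ B + q * Real.log d₀ + 1 / 4 := by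
  set U := Ω ∩ planeForm a b ⁻¹' Ioo (c + ε) (c + d₀)
  have hU : IsOpen U := hΩ.inter (isOpen_Ioo.preimage (planeForm a b).continuous)
  have hsub (x : ℝ × ℝ) : 𝓝[U] x ≤ 𝓝[Ω] x := nhdsWithin_mono x inter_subset_left
  have hle {x : ℝ × ℝ} (h : ∀ᶠ p in 𝓝[U] x, u p ≤ B) : ∀ᶠ p in 𝓝[U] x,
      u p - logBarrier a b (c + ε) A q p ≤ B + q * Real.log d₀ + 1 / 4 := by
    filter_upwards [h, self_mem_nhdsWithin] with p hup hpU
    have hlow := neg_mul_log_sub_le_logBarrier (c := c + ε) (d₀ := d₀) hq.le (hs p hpU.1)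
      ⟨by linarith [hpU.2.1], by linarith [hpU.2.2]⟩
    linarith
  refine IsTranslatorOn.sub_le_of_eventually_le (U := U)
    ⟨hu.1.mono inter_subset_left, fun p hp => hu.2 p hp.1⟩ hU (hb.subset inter_subset_left)
    (fun p hp => contDiffAt_logBarrier hp.2.1)
    (fun p hp => minimalSurfaceOp_logBarrier_lt hab hA hqA (hs p hp.1) hp.2.1) (fun x hx => ?_)
    ⟨hp, by linarith [hpd.1], by linarith [hpd.2]⟩
  have hxΩ : x ∈ closure Ω := closure_mono inter_subset_left hx.1
  have hxd : planeForm a b x ∈ Icc (c + ε) (c + d₀) := by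
    have := closure_mono inter_subset_right hx.1
    have := (planeForm a b).continuous.closure_preimage_subset _ this
    exact closure_minimal Ioo_subset_Icc_self isClosed_Icc this
  by_cases hxmem : x ∈ Ω
  · rcases hxd.2.eq_or_lt with hxd₀ | hxd₀
    · exact hle (hsub x (hB x hxΩ hxd₀))
    have hxε : planeForm a b x = c + ε := by
      refine le_antisymm (not_lt.1 fun hlt => ?_) hxd.1
      exact (hU.frontier_eq ▸ hx).2 ⟨hxmem, hlt, hxd₀⟩
    have hbar := (tendsto_logBarrier_atTop (A := A) hq hxε).mono_left
      (nhdsWithin_mono x fun p (hp : p ∈ U) => hp.2.1)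
    have hux : Tendsto u (𝓝[U] x) (𝓝 (u x)) :=
      (hu.contDiffAt hΩ hxmem).continuousAt.tendsto.mono_left nhdsWithin_le_nhds
    exact (hux.add_atBot (tendsto_neg_atTop_atBot.comp hbar)).eventually_le_atBot _
  · exact hle (hsub x ((hbd x (hΩ.frontier_eq ▸ ⟨hxΩ, hxmem⟩)
      ⟨by linarith [hxd.1], by linarith [hxd.2]⟩).eventually_le_atBot B))

theorem IsTranslatorOn.exists_exp_le_mul_rpow (hu : IsTranslatorOn Ω u) (hΩ : IsOpen Ω)
    (hb : Bornology.IsBounded Ω) (hab : a ^ 2 + b ^ 2 = 1) (hd₀ : 0 < d₀)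
    (hbd : ∀ x ∈ frontier Ω, planeForm a b x - c ∈ Ioc 0 d₀ → Tendsto u (𝓝[Ω] x) atBot) :
    ∃ C q : ℝ, q < 1 ∧ ∀ p ∈ Ω, planeForm a b p - c ∈ Ioo 0 d₀ →
      rexp (u p) ≤ C * (planeForm a b p - c) ^ (-q) := by
  obtain ⟨A, hA, hs⟩ := exists_mul_sq_le_half (planeForm (-b) a) hb
  obtain ⟨B, hB⟩ : ∃ B, ∀ x ∈ closure Ω ∩ planeForm a b ⁻¹' {c + d₀},
      ∀ᶠ p in 𝓝[Ω] x, u p ≤ B := by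
    refine exists_forall_eventually_le_of_isCompact (hb.isCompact_closure.inter_right
      (isClosed_singleton.preimage (planeForm a b).continuous)) fun x ⟨hx, hxd⟩ => ?_
    by_cases hxΩ : x ∈ Ω
    · exact ⟨u x + 1, nhdsWithin_le_nhds
        ((hu.contDiffAt hΩ hxΩ).continuousAt.eventually_le_const (lt_add_one _))⟩
    · have hxd' : planeForm a b x - c = d₀ := sub_eq_iff_eq_add'.2 hxd
      exact ⟨0, (hbd x (hΩ.frontier_eq ▸ ⟨hx, hxΩ⟩)
        ⟨hxd'.symm ▸ hd₀, hxd'.le⟩).eventually_le_atBot 0⟩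
  set q := (1 + A / 2) / (1 + A) with hq
  have hq0 : 0 < q := by positivity
  have hqA : q * (1 + A) = 1 + A / 2 := div_mul_cancel₀ _ (by positivity)
  refine ⟨rexp (B + q * Real.log d₀ + 1 / 4), q, by rw [hq, div_lt_one (by positivity)]; linarith,
    fun p hp hpd => ?_⟩
  have hlim : Tendsto (fun ε => u p - logBarrier a b (c + ε) A q p) (𝓝[>] 0)
      (𝓝 (u p - logBarrier a b (c + 0) A q p)) := by
    have hne : planeForm a b p - (c + 0) ≠ 0 := by rw [add_zero]; exact hpd.1.ne'
    have : ContinuousAt (fun ε => u p - logBarrier a b (c + ε) A q p) 0 := by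
      unfold logBarrier
      fun_prop (disch := assumption)
    exact this.tendsto.mono_left nhdsWithin_le_nhds
  have hle : u p - logBarrier a b (c + 0) A q p ≤ B + q * Real.log d₀ + 1 / 4 := by
    refine le_of_tendsto hlim ?_
    filter_upwards [Ioo_mem_nhdsGT hpd.1] with ε hε
    exact hu.sub_logBarrier_le hΩ hb hab hA hq0 hqA hs hε.1 hbd (fun x hx hxd => hB x ⟨hx, hxd⟩)
      hp ⟨hε.2, hpd.2⟩
  rw [Real.rpow_def_of_pos hpd.1, ← Real.exp_add, Real.exp_le_exp]
  rw [add_zero, logBarrier] at hle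
  have hsq : 0 ≤ A / 2 * planeForm (-b) a p ^ 2 := by positivity
  linarith

end BoundaryGrowth

section Shear

/-- The area-preserving shear `(x, y) ↦ (x - κ y, y)`; with `κ = cot α` it straightens the
parallelogram `P(α, w, L)` into the rectangle `(0, L) × (0, w)`. -/
def shear (κ : ℝ) : (ℝ × ℝ) ≃L[ℝ] ℝ × ℝ :=
  ContinuousLinearEquiv.equivOfInverse
    ((ContinuousLinearMap.fst ℝ ℝ ℝ - κ • ContinuousLinearMap.snd ℝ ℝ ℝ).prod
      (ContinuousLinearMap.snd ℝ ℝ ℝ))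
    ((ContinuousLinearMap.fst ℝ ℝ ℝ + κ • ContinuousLinearMap.snd ℝ ℝ ℝ).prod
      (ContinuousLinearMap.snd ℝ ℝ ℝ))
    (fun p => by ext <;> simp) (fun p => by ext <;> simp)

theorem shear_apply (κ : ℝ) (p : ℝ × ℝ) : shear κ p = (p.1 - κ * p.2, p.2) := rfl

theorem measurePreserving_shear (κ : ℝ) : MeasurePreserving (shear κ) := by
  have hskew : MeasurePreserving (fun p : ℝ × ℝ => (p.1, p.2 - κ * p.1)) :=
    (MeasurePreserving.id volume).skew_product (g := fun y x => x - κ * y) (by fun_prop)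
      (Eventually.of_forall fun y => (measurePreserving_sub_right volume (κ * y)).map_eq)
  exact (Measure.measurePreserving_swap.comp hskew).comp Measure.measurePreserving_swap

theorem integrableOn_comp_shear_fst {κ w : ℝ} {s : Set ℝ} {h : ℝ → ℝ} (hh : IntegrableOn h s) :
    IntegrableOn (fun p => h (shear κ p).1) (shear κ ⁻¹' s ×ˢ Ioo 0 w) := by
  have hrect : IntegrableOn (fun p : ℝ × ℝ => h p.1) (s ×ˢ Ioo 0 w) := by
    rw [IntegrableOn, Measure.volume_eq_prod, ← Measure.prod_restrict]
    exact Integrable.comp_fst hh _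
  exact ((measurePreserving_shear κ).integrableOn_comp_preimage
    (shear κ).toHomeomorph.measurableEmbedding).2 hrect

theorem intervalIntegrable_affine_rpow {r s : ℝ} (hr : -1 < r) (hs : s ≠ 0) (c a b : ℝ) :
    IntervalIntegrable (fun t => (s * t - c) ^ r) volume a b := by
  have h := ((intervalIntegral.intervalIntegrable_rpow' (a := s * a - c) (b := s * b - c)
    hr).comp_sub_right c).comp_mul_left (c := s)
  simpa [hs] using h

end Shear

section Parallelogram

variable {α w L : ℝ} {u : ℝ × ℝ → ℝ} {q : ℝ × ℝ}

theorem Pgram_eq_preimage_shear (α w L : ℝ) :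
    Pgram α w L = shear (cos α / sin α) ⁻¹' Ioo 0 L ×ˢ Ioo 0 w := by
  ext p
  simp only [Pgram, mem_ofPred_eq, mem_preimage, shear_apply, mem_prod, mem_Ioo, sub_pos,
    sub_lt_iff_lt_add, mul_div_assoc, mul_comm (cos α / sin α)]
  tauto

theorem isOpen_Pgram (α w L : ℝ) : IsOpen (Pgram α w L) := by
  rw [Pgram_eq_preimage_shear]
  exact (isOpen_Ioo.prod isOpen_Ioo).preimage (shear _).continuous

theorem isBounded_Pgram (α w L : ℝ) : Bornology.IsBounded (Pgram α w L) := by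
  rw [Pgram_eq_preimage_shear]
  exact (shear (cos α / sin α)).antilipschitz.isBounded_preimage
    ((Metric.isBounded_Ioo 0 L).prod (Metric.isBounded_Ioo 0 w))

theorem isPreconnected_Pgram (α w L : ℝ) : IsPreconnected (Pgram α w L) := by
  rw [Pgram_eq_preimage_shear]
  exact (((convex_Ioo 0 L).prod (convex_Ioo 0 w)).linear_preimage
    (shear (cos α / sin α)).toLinearMap).isPreconnected

theorem mem_frontier_Pgram (hw : 0 < w) (hL : 0 < L) : q ∈ frontier (Pgram α w L) ↔
    (shear (cos α / sin α) q).1 ∈ Icc 0 L ∧ q.2 ∈ ({0, w} : Set ℝ) ∨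
      (shear (cos α / sin α) q).1 ∈ ({0, L} : Set ℝ) ∧ q.2 ∈ Icc 0 w := by
  rw [Pgram_eq_preimage_shear, ← ContinuousLinearEquiv.coe_toHomeomorph,
    ← Homeomorph.preimage_frontier, frontier_prod_eq, frontier_Ioo hL, frontier_Ioo hw,
    closure_Ioo hL.ne, closure_Ioo hw.ne]
  rfl

theorem ScherkBVP.tendsto_atBot (hu : ScherkBVP α w L u)
    (hq₁ : (shear (cos α / sin α) q).1 ∈ Ioo 0 L) (hq₂ : q.2 ∈ ({0, w} : Set ℝ)) :
    Tendsto u (𝓝[Pgram α w L] q) atBot := by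
  obtain ⟨x, y⟩ := q
  simp only [shear_apply, mem_Ioo, sub_pos, sub_lt_iff_lt_add, mul_comm (cos α / sin α),
    ← mul_div_assoc] at hq₁
  rcases hq₂ with rfl | rfl
  · simp only [zero_mul, zero_div, add_zero] at hq₁
    exact hu.2.1 x hq₁.1 hq₁.2
  · exact hu.2.2.1 x hq₁.1 hq₁.2

theorem ScherkBVP.tendsto_atTop (hu : ScherkBVP α w L u)
    (hq₁ : (shear (cos α / sin α) q).1 ∈ ({0, L} : Set ℝ)) (hq₂ : q.2 ∈ Ioo 0 w) :
    Tendsto u (𝓝[Pgram α w L] q) atTop := by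
  obtain ⟨x, y⟩ := q
  simp only [shear_apply, mem_insert_iff, mem_singleton_iff, sub_eq_iff_eq_add, zero_add,
    mul_comm (cos α / sin α), ← mul_div_assoc] at hq₁
  rcases hq₁ with rfl | rfl
  · exact hu.2.2.2.1 y hq₂.1 hq₂.2
  · exact hu.2.2.2.2 y hq₂.1 hq₂.2

/-- The four corners of the parallelogram `P(α, w, L)`. -/
def corners (α w L : ℝ) : Set (ℝ × ℝ) :=
  shear (cos α / sin α) ⁻¹' ({0, L} : Set ℝ) ×ˢ ({0, w} : Set ℝ)

theorem finite_corners (α w L : ℝ) : (corners α w L).Finite :=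
  ((Set.toFinite _).prod (Set.toFinite _)).preimage (shear _).injective.injOn

theorem ScherkBVP.sameInfiniteBoundary {v : ℝ × ℝ → ℝ} (hw : 0 < w) (hL : 0 < L)
    (hu : ScherkBVP α w L u) (hv : ScherkBVP α w L v) :
    SameInfiniteBoundary (Pgram α w L) (corners α w L) u v := by
  intro q hq
  have hIoo {r t : ℝ} (ht : t ∈ Icc 0 r) (h : t ∉ ({0, r} : Set ℝ)) : t ∈ Ioo 0 r :=
    Icc_sdiff_both (a := 0) (b := r) ▸ ⟨ht, h⟩
  rcases (mem_frontier_Pgram hw hL).1 hq.1 with ⟨hq₁, hq₂⟩ | ⟨hq₁, hq₂⟩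
  · have hq₁' := hIoo hq₁ fun h => hq.2 ⟨h, hq₂⟩
    exact Or.inl ⟨hu.tendsto_atBot hq₁' hq₂, hv.tendsto_atBot hq₁' hq₂⟩
  · have hq₂' := hIoo hq₂ fun h => hq.2 ⟨hq₁, h⟩
    exact Or.inr ⟨hu.tendsto_atTop hq₁ hq₂', hv.tendsto_atTop hq₁ hq₂'⟩

theorem ScherkBVP.integrableOn_exp_strip (hα : α ∈ Ioo 0 π) (hw : 0 < w) (hL : 0 < L)
    (hu : ScherkBVP α w L u) {σ c d₀ r₁ r₂ : ℝ} (hσ : σ ^ 2 = 1) (hd₀ : 0 < d₀)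
    (hside : ∀ ξ ∈ Icc 0 L, σ * sin α * ξ - c ∈ Ioc 0 d₀ → ξ ∈ Ioo 0 L)
    (hr : Ioo r₁ r₂ ⊆ Ioo 0 L) (hd : ∀ ξ ∈ Ioo r₁ r₂, σ * sin α * ξ - c ∈ Ioo 0 d₀) :
    IntegrableOn (fun p => rexp (u p)) (shear (cos α / sin α) ⁻¹' Ioo r₁ r₂ ×ˢ Ioo 0 w) := by
  have hsin : 0 < sin α := sin_pos_of_mem_Ioo hα
  have hσ0 : σ ≠ 0 := by rintro rfl; simp at hσ
  have hform (p : ℝ × ℝ) : planeForm (σ * sin α) (-(σ * cos α)) p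
      = σ * sin α * (shear (cos α / sin α) p).1 := by
    rw [planeForm_apply, shear_apply]
    field_simp
    ring
  obtain ⟨C, k, hk, hC⟩ := hu.1.exists_exp_le_mul_rpow (isOpen_Pgram α w L) (isBounded_Pgram α w L)
    (a := σ * sin α) (b := -(σ * cos α)) (c := c) (d₀ := d₀)
    (by linear_combination σ ^ 2 * sin_sq_add_cos_sq α + hσ) hd₀ (fun x hx hxd => by
      rw [hform] at hxd
      rcases (mem_frontier_Pgram hw hL).1 hx with ⟨hx₁, hx₂⟩ | ⟨hx₁, -⟩
      · exact hu.tendsto_atBot (hside _ hx₁ hxd) hx₂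
      · have hIcc : (shear (cos α / sin α) x).1 ∈ Icc 0 L :=
          pair_subset (left_mem_Icc.2 hL.le) (right_mem_Icc.2 hL.le) hx₁
        have hIoo := hside _ hIcc hxd
        exact absurd hx₁ (by simp [hIoo.1.ne', hIoo.2.ne]))
  have hsub : shear (cos α / sin α) ⁻¹' Ioo r₁ r₂ ×ˢ Ioo 0 w ⊆ Pgram α w L := by
    rw [Pgram_eq_preimage_shear]
    exact preimage_mono (prod_mono_left hr)
  have hmeas : MeasurableSet (shear (cos α / sin α) ⁻¹' Ioo r₁ r₂ ×ˢ Ioo 0 w) :=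
    ((isOpen_Ioo.prod isOpen_Ioo).preimage (shear _).continuous).measurableSet
  have hint : IntegrableOn (fun t => C * (σ * sin α * t - c) ^ (-k)) (Ioo r₁ r₂) :=
    ((intervalIntegrable_affine_rpow (neg_lt_neg hk) (mul_ne_zero hσ0 hsin.ne') c r₁ r₂).1.mono_set
      Ioo_subset_Ioc_self).const_mul C
  refine (integrableOn_comp_shear_fst hint).mono'
    ((hu.1.1.continuousOn.rexp.mono hsub).aestronglyMeasurable hmeas)
    (ae_restrict_of_forall_mem hmeas fun p hp => ?_)
  rw [Real.norm_of_nonneg (exp_pos _).le, ← hform]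
  exact hC p (hsub hp) (by rw [hform]; exact hd _ hp.1)

theorem ScherkBVP.integrableOn_exp (hα : α ∈ Ioo 0 π) (hw : 0 < w) (hL : 0 < L)
    (hu : ScherkBVP α w L u) : IntegrableOn (fun p => rexp (u p)) (Pgram α w L) := by
  have hsin : 0 < sin α := sin_pos_of_mem_Ioo hα
  have hunion : Pgram α w L ⊆ shear (cos α / sin α) ⁻¹' Ioo 0 (3 / 4 * L) ×ˢ Ioo 0 w ∪
      shear (cos α / sin α) ⁻¹' Ioo (1 / 4 * L) L ×ˢ Ioo 0 w := by
    rw [Pgram_eq_preimage_shear, ← preimage_union, ← union_prod]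
    refine preimage_mono (prod_mono_left fun t ht => ?_)
    rcases lt_or_ge t (3 / 4 * L) with h | h
    · exact Or.inl ⟨ht.1, h⟩
    · exact Or.inr ⟨by linarith, ht.2⟩
  refine IntegrableOn.mono_set (IntegrableOn.union ?_ ?_) hunion
  · refine hu.integrableOn_exp_strip hα hw hL (σ := 1) (c := 0) (d₀ := sin α * (3 / 4 * L))
      (one_pow 2) (by positivity) (fun ξ _ h => ?_) (Ioo_subset_Ioo_right (by linarith))
      fun ξ hξ => ?_
    · constructor <;> nlinarith [h.1, h.2]
    · constructor <;> nlinarith [hξ.1, hξ.2]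
  · refine hu.integrableOn_exp_strip hα hw hL (σ := -1) (c := -(sin α * L))
      (d₀ := sin α * (3 / 4 * L)) (by norm_num) (by positivity) (fun ξ _ h => ?_)
      (Ioo_subset_Ioo_left (by linarith)) fun ξ hξ => ?_
    · constructor <;> nlinarith [h.1, h.2]
    · constructor <;> nlinarith [hξ.1, hξ.2]

end Parallelogram

/-- two Scherk translators on the same parallelogram differ by a constant. -/
theorem scherk_translator_unique (α w L : ℝ) (hα : α ∈ Set.Ioo 0 π)
    (hw : 0 < w) (hL : 0 < L) (u v : ℝ × ℝ → ℝ)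
    (hu : ScherkBVP α w L u) (hv : ScherkBVP α w L v) :
    ∃ c : ℝ, ∀ p ∈ Pgram α w L, u p - v p = c := by
  exact hu.1.exists_sub_eq_const hv.1 (isOpen_Pgram α w L) (isBounded_Pgram α w L)
    (isPreconnected_Pgram α w L) (finite_corners α w L) (hu.sameInfiniteBoundary hw hL hv)
    (hu.integrableOn_exp hα hw hL) (hv.integrableOn_exp hα hw hL)
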